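/- Slanted Cylinder Lemma: Let Y = (y,s) ∈ ℝ^{n+1} with s > 0, let r > 0, and suppose K⁻¹ r |y| ≤ s ≤ K r² for some constant K > 1. Let u ∈ C^{2,1} on the closure of the slanted cylinder V_r(Y) satisfy −u_t + Lu ≥ 0 at every point of V_r(Y), and suppose u ≤ 0 on D_r := B_r(0) × {0}. Then u(Y) ≤ β₂ · sup_{V_r(Y)} u₊, where u₊ := max(u,0) and β₂ < 1 is a positive constant depending only on ν, n, K and S. -/

import Mathlib

open MeasureTheory ENNReal Metric Set RealInnerProductSpace

noncomputable section

/-- `n`-dimensional Euclidean space. -/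
abbrev En (n : ℕ) : Type := EuclideanSpace ℝ (Fin n)

variable {n : ℕ}

/-- Time derivative `u_t`. -/
def Dt (u : En n × ℝ → ℝ) (X : En n × ℝ) : ℝ :=
  deriv (fun t => u (X.1, t)) X.2

/-- First spatial derivative `D_i u`. -/
def Dx (u : En n × ℝ → ℝ) (i : Fin n) (X : En n × ℝ) : ℝ :=
  fderiv ℝ (fun x => u (x, X.2)) X.1 (EuclideanSpace.single i 1)

/-- Second spatial derivative `D_{ij} u`. -/
def Dxx (u : En n × ℝ → ℝ) (i j : Fin n) (X : En n × ℝ) : ℝ :=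
  Dx (Dx u j) i X

/-- `u` is of class `C^{2,1}` on `Q`: `u`, `D_i u`, `D_{ij} u`, `u_t` exist and are
continuous on `Q`. -/
structure IsC21 (u : En n × ℝ → ℝ) (Q : Set (En n × ℝ)) : Prop where
  cont : ContinuousOn u Q
  diff_t : ∀ X ∈ Q, DifferentiableAt ℝ (fun t => u (X.1, t)) X.2
  diff_x : ∀ X ∈ Q, DifferentiableAt ℝ (fun x => u (x, X.2)) X.1
  diff_xx : ∀ j : Fin n, ∀ X ∈ Q, DifferentiableAt ℝ (fun x => Dx u j (x, X.2)) X.1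
  cont_t : ContinuousOn (Dt u) Q
  cont_x : ∀ i, ContinuousOn (Dx u i) Q
  cont_xx : ∀ i j, ContinuousOn (Dxx u i j) Q

/-- Uniform parabolicity with constant `ν` on `Q`:
`ν⁻¹|ξ|² ≤ Σ a_ij ξ_i ξ_j` and `Σ a_ij² ≤ ν²`. -/
def UnifParabolic (ν : ℝ) (a : En n × ℝ → Matrix (Fin n) (Fin n) ℝ)
    (Q : Set (En n × ℝ)) : Prop :=
  ∀ X ∈ Q, (∀ ξ : Fin n → ℝ, ν⁻¹ * (∑ i, ξ i ^ 2) ≤ ∑ i, ∑ j, a X i j * ξ i * ξ j) ∧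
    (∑ i, ∑ j, (a X i j) ^ 2) ≤ ν ^ 2

/-- `Lu = Σ_{ij} a_ij D_ij u + Σ_i b_i D_i u`. -/
def Lop (a : En n × ℝ → Matrix (Fin n) (Fin n) ℝ) (b : En n × ℝ → En n)
    (u : En n × ℝ → ℝ) (X : En n × ℝ) : ℝ :=
  (∑ i, ∑ j, a X i j * Dxx u i j X) + ∑ i, b X i * Dx u i X

/-- `∫ (ess sup_t |f(x,t)|)ⁿ dx`, the `n`-th power of the `L^n_x L^∞_t` norm of `f`
over the set `Q ⊆ ℝⁿ × ℝ`. -/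
def LxnLtinfPow {E : Type*} [NNNorm E] (f : En n × ℝ → E) (Q : Set (En n × ℝ)) : ℝ≥0∞ :=
  ∫⁻ x, (essSup (fun t => (‖f (x, t)‖₊ : ℝ≥0∞)) (volume.restrict {t | (x, t) ∈ Q})) ^ n

/-- The `L^n_x L^∞_t` norm of `f` over `Q`. -/
def LxnLtinf {E : Type*} [NNNorm E] (f : En n × ℝ → E) (Q : Set (En n × ℝ)) : ℝ≥0∞ :=
  (LxnLtinfPow f Q) ^ (1 / (n : ℝ))

/-- The box `B_ρ(y) × (t₁, t₂)`. -/
def box (y : En n) (ρ t₁ t₂ : ℝ) : Set (En n × ℝ) := ball y ρ ×ˢ Ioo t₁ t₂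

/-- The standard parabolic cylinder `Q_r(Y) = B_r(y) × (s - r², s)`. -/
def pcyl (Y : En n × ℝ) (r : ℝ) : Set (En n × ℝ) := box Y.1 r (Y.2 - r ^ 2) Y.2

/-- The slanted cylinder `V_r(Y) = {(x,t) : |x - (t/s)y| < r, 0 < t < s}`. -/
def slantCyl (Y : En n × ℝ) (r : ℝ) : Set (En n × ℝ) :=
  {X | ‖X.1 - (X.2 / Y.2) • Y.1‖ < r ∧ 0 < X.2 ∧ X.2 < Y.2}

/-- Supremum of the positive part `u₊` over a set `A`. -/
def supPos (u : En n × ℝ → ℝ) (A : Set (En n × ℝ)) : ℝ :=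
  sSup ((fun X => max (u X) 0) '' A)

/-- `Ω` is a Lipschitz domain with character `(rΩ, mΩ)`: at every boundary point `y`
there is a coordinate frame, encoded by the unit "vertical" direction `e`, in which
`Ω ∩ B_{rΩ}(y)` is the region above the graph of an `mΩ`-Lipschitz function `φ`
of the tangential variables. -/
def IsLipschitzDomain (Ω : Set (En n)) (rΩ mΩ : ℝ) : Prop :=
  0 < rΩ ∧ 0 ≤ mΩ ∧
  ∀ y ∈ frontier Ω, ∃ (e : En n) (φ : En n → ℝ),
    ‖e‖ = 1 ∧ LipschitzWith (Real.toNNReal mΩ) φ ∧ φ 0 = 0 ∧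
    (∀ x, x ∈ Ω ∩ ball y rΩ ↔
      dist x y < rΩ ∧ φ ((x - y) - ⟪x - y, e⟫ • e) < ⟪x - y, e⟫) ∧
    (∀ ρ : ℝ, 0 < ρ → ρ ≤ rΩ → y + ρ • e ∈ Ω)

/-!
Subtracting `u` from an upper bound turns the claim into a lower bound for a nonnegative
supersolution `v`, whose drift at `(x, t)` is controlled by `m x`, where `∫ mⁿ` is bounded.

The drift estimate is an Aleksandrov-Bakelman-Pucci argument in the space variable alone. If `φ` is
a strict subsolution barrier lying below `v` near the parabolic boundary and above it somewhere,
then every small slope `p` is the slope at which `φ - v` touches a plane `⟨p, ·⟩ + c` from below in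
the whole cylinder. At a contact point the equation bounds `D²v - D²φ` by a multiple of `m`, and
comparing two contact planes shows that the slope is locally a Lipschitz function of the space
variable, whatever the contact times, with constant proportional to `m x`. The area formula bounds
the volume of the slopes by the integral of `mⁿ` over the contact set.

When `∫ mⁿ` is small this makes a lower bound for `v` persist in time. In general, one of many
disjoint small balls carries little drift, which gives a lower bound on a small core, and this
bound spreads: the failure of each of many Gaussian barriers at successive dyadic scales costs a
fixed amount of drift on pairwise disjoint sets. Iterating the resulting growth step along the axis
of the slanted cylinder, with a number of steps depending on `ν`, `n`, `K` and `S` only, gives the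
lemma.
-/

open Filter Topology

set_option maxSynthPendingDepth 3

/-! ### Images of sets under locally Lipschitz relations -/

section AreaEstimate

variable {E : Type*} [NormedAddCommGroup E] [NormedSpace ℝ E] [FiniteDimensional ℝ E]
  [MeasurableSpace E] [BorelSpace E] (μ : Measure E) [μ.IsAddHaarMeasure]

theorem addHaar_image_le_of_lipschitzOnWith {C : NNReal} {f : E → E} {s : Set E}
    (hf : LipschitzOnWith C f s) :
    μ (f '' s) ≤ (C : ℝ≥0∞) ^ Module.finrank ℝ E * μ s := by
  have hH := hf.hausdorffMeasure_image_le (d := (Module.finrank ℝ E : ℝ)) (Nat.cast_nonneg _)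
  rw [ENNReal.rpow_natCast] at hH
  rw [Measure.isAddLeftInvariant_eq_smul μ (μH[(Module.finrank ℝ E : ℝ)])]
  simp only [Measure.smul_apply, ENNReal.smul_def, smul_eq_mul]
  rw [mul_left_comm]
  gcongr

theorem exists_measurable_partition_dist_lt (X : Type*) [PseudoMetricSpace X]
    [TopologicalSpace.SeparableSpace X] [MeasurableSpace X] [OpensMeasurableSpace X]
    {δ : ℝ} (hδ : 0 < δ) :
    ∃ D : ℕ → Set X, (∀ i, MeasurableSet (D i)) ∧ Pairwise (fun i j => Disjoint (D i) (D j)) ∧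
      ⋃ i, D i = univ ∧ ∀ i, ∀ x ∈ D i, ∀ y ∈ D i, dist x y < δ := by
  rcases isEmpty_or_nonempty X with hX | hX
  · exact ⟨fun _ => ∅, fun _ => .empty, fun _ _ _ => disjoint_bot_left,
      Subsingleton.elim _ _, fun _ x => hX.elim x⟩
  let c := TopologicalSpace.denseSeq X
  refine ⟨disjointed fun i => ball (c i) (δ / 2), .disjointed fun _ => measurableSet_ball,
    disjoint_disjointed _, ?_, fun i x hx y hy => ?_⟩
  · rw [iUnion_disjointed]
    exact eq_univ_of_forall fun x =>
      mem_iUnion.2 ((TopologicalSpace.denseRange_denseSeq X).exists_dist_lt x (half_pos hδ))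
  · have hxc := mem_ball.1 (disjointed_subset _ i hx)
    have hyc := mem_ball.1 (disjointed_subset _ i hy)
    linarith [dist_triangle_right x y (c i)]

variable {f : E → E} {k : E → ℝ} {s : Set E}

theorem addHaar_image_le_lintegral_add {d η : ℝ} (hs : IsCompact s)
    (hk : ContinuousOn k s) (hd : 0 < d) (hη : 0 < η)
    (hf : ∀ x ∈ s, ∀ y ∈ s, dist x y < d → dist (f x) (f y) ≤ (k y + η) * dist x y) :
    μ (f '' s) ≤ ∫⁻ x in s, ENNReal.ofReal (k x + 3 * η) ^ Module.finrank ℝ E ∂μ := by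
  obtain ⟨d', hd', hosc⟩ := Metric.uniformContinuousOn_iff.1
    (hs.uniformContinuousOn_of_continuous hk) η hη
  obtain ⟨D, hDm, hDd, hDU, hD⟩ := exists_measurable_partition_dist_lt E (lt_min hd hd')
  have hms : ∀ i, MeasurableSet (s ∩ D i) := fun i => hs.measurableSet.inter (hDm i)
  have hsD : s = ⋃ i, s ∩ D i := by rw [← inter_iUnion, hDU, inter_univ]
  have hpiece : ∀ i, μ (f '' (s ∩ D i)) ≤
      ∫⁻ x in s ∩ D i, ENNReal.ofReal (k x + 3 * η) ^ Module.finrank ℝ E ∂μ := by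
    intro i
    rcases (s ∩ D i).eq_empty_or_nonempty with he | ⟨z, hzs, hzD⟩
    · simp [he]
    have hkz : ∀ x ∈ s ∩ D i, |k x - k z| < η := fun x hx =>
      hosc x hx.1 z hzs ((hD i x hx.2 z hzD).trans_le (min_le_right _ _))
    have hlip : LipschitzOnWith (k z + 2 * η).toNNReal f (s ∩ D i) := by
      refine LipschitzOnWith.of_dist_le_mul fun x hx y hy => ?_
      refine (hf x hx.1 y hy.1 ((hD i x hx.2 y hy.2).trans_le (min_le_left _ _))).trans ?_
      gcongr
      exact le_trans (by linarith [(abs_lt.1 (hkz y hy)).2]) (Real.le_coe_toNNReal _)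
    refine (addHaar_image_le_of_lipschitzOnWith μ hlip).trans ?_
    rw [← setLIntegral_const]
    refine setLIntegral_mono' (hms i) fun x hx => ?_
    exact pow_le_pow_left' (ENNReal.ofReal_le_ofReal
      (by linarith [(abs_lt.1 (hkz x hx)).1])) _
  calc μ (f '' s) = μ (⋃ i, f '' (s ∩ D i)) := by rw [← image_iUnion, ← hsD]
    _ ≤ ∑' i, μ (f '' (s ∩ D i)) := measure_iUnion_le _
    _ ≤ ∑' i, ∫⁻ x in s ∩ D i, ENNReal.ofReal (k x + 3 * η) ^ Module.finrank ℝ E ∂μ :=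
        ENNReal.tsum_le_tsum hpiece
    _ = ∫⁻ x in s, ENNReal.ofReal (k x + 3 * η) ^ Module.finrank ℝ E ∂μ := by
        rw [← lintegral_iUnion hms fun i j hij =>
          (hDd hij).mono inter_subset_right inter_subset_right, ← hsD]

theorem addHaar_image_le_lintegral_of_dist_le (hs : IsCompact s) (hk : ContinuousOn k s)
    (hf : ∀ η > 0, ∃ d > 0, ∀ x ∈ s, ∀ y ∈ s, dist x y < d →
      dist (f x) (f y) ≤ (k y + η) * dist x y) :
    μ (f '' s) ≤ ∫⁻ x in s, ENNReal.ofReal (k x) ^ Module.finrank ℝ E ∂μ := by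
  obtain ⟨M, hM⟩ := hs.bddAbove_image hk
  have hkm : AEMeasurable k (μ.restrict s) := hk.aemeasurable hs.measurableSet
  have hlim : Tendsto (fun j : ℕ => ∫⁻ x in s,
      ENNReal.ofReal (k x + 3 * (1 / ((j : ℝ) + 1))) ^ Module.finrank ℝ E ∂μ) atTop
      (𝓝 (∫⁻ x in s, ENNReal.ofReal (k x) ^ Module.finrank ℝ E ∂μ)) := by
    refine tendsto_lintegral_of_dominated_convergence'
      (fun _ => ENNReal.ofReal (M + 3) ^ Module.finrank ℝ E) (fun j => by fun_prop)
      (fun j => ?_) ?_ (Eventually.of_forall fun x => ?_)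
    · refine (ae_restrict_iff' hs.measurableSet).2 (Eventually.of_forall fun x hx => ?_)
      refine pow_le_pow_left' (ENNReal.ofReal_le_ofReal ?_) _
      linarith [hM ⟨x, hx, rfl⟩, Nat.one_div_le_one_div (α := ℝ) j.zero_le]
    · rw [setLIntegral_const]
      exact ENNReal.mul_ne_top (by finiteness) hs.measure_lt_top.ne
    · refine ENNReal.Tendsto.pow (ENNReal.tendsto_ofReal ?_)
      simpa using (tendsto_one_div_add_atTop_nhds_zero_nat (𝕜 := ℝ)).const_mul 3 |>.const_add (k x)
  refine ge_of_tendsto' hlim fun j => ?_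
  obtain ⟨d, hd, hfd⟩ := hf (1 / ((j : ℝ) + 1)) (by positivity)
  exact addHaar_image_le_lintegral_add μ hs hk hd (by positivity) hfd

theorem addHaar_image_snd_le_lintegral_of_dist_le {R : Set (E × E)}
    (hR : IsCompact (Prod.fst '' R)) (hk : ContinuousOn k (Prod.fst '' R))
    (hL : ∀ η > 0, ∃ d > 0, ∀ q ∈ R, ∀ q' ∈ R, dist q.1 q'.1 < d →
      dist q.2 q'.2 ≤ (k q'.1 + η) * dist q.1 q'.1) :
    μ (Prod.snd '' R) ≤
      ∫⁻ x in Prod.fst '' R, ENNReal.ofReal (k x) ^ Module.finrank ℝ E ∂μ := by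
  have hsel : ∀ x, ∃ p, x ∈ Prod.fst '' R → (x, p) ∈ R := by
    intro x
    by_cases hx : x ∈ Prod.fst '' R
    · obtain ⟨⟨x, p⟩, hq, rfl⟩ := hx
      exact ⟨p, fun _ => hq⟩
    · exact ⟨0, fun h => absurd h hx⟩
  choose P hP using hsel
  have hsnd : Prod.snd '' R ⊆ P '' (Prod.fst '' R) := by
    rintro _ ⟨q, hq, rfl⟩
    obtain ⟨d, hd, H⟩ := hL 1 one_pos
    have hqP := H q hq _ (hP q.1 ⟨q, hq, rfl⟩) (by simpa using hd)
    simp only [dist_self, mul_zero] at hqP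
    exact ⟨q.1, ⟨q, hq, rfl⟩, (dist_le_zero.1 hqP).symm⟩
  refine (measure_mono hsnd).trans (addHaar_image_le_lintegral_of_dist_le μ hR hk fun η hη => ?_)
  obtain ⟨d, hd, H⟩ := hL η hη
  exact ⟨d, hd, fun x hx y hy => H _ (hP x hx) _ (hP y hy)⟩

end AreaEstimate

theorem card_mul_le_setLIntegral_of_disjoint {X : Type*} [MeasurableSpace X] {μ : Measure X}
    {ι : Type*} {f : X → ℝ≥0∞} {c : ℝ≥0∞} {t : Finset ι} {s : Set X} {A : ι → Set X}
    (hA : ∀ i ∈ t, MeasurableSet (A i)) (hAs : ∀ i ∈ t, A i ⊆ s)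
    (hd : (t : Set ι).PairwiseDisjoint A) (hc : ∀ i ∈ t, c ≤ ∫⁻ x in A i, f x ∂μ) :
    t.card * c ≤ ∫⁻ x in s, f x ∂μ := by
  calc t.card * c = ∑ _i ∈ t, c := by rw [Finset.sum_const, nsmul_eq_mul]
    _ ≤ ∑ i ∈ t, ∫⁻ x in A i, f x ∂μ := Finset.sum_le_sum hc
    _ = ∫⁻ x in ⋃ i ∈ t, A i, f x ∂μ := (lintegral_biUnion_finset hd hA f).symm
    _ ≤ ∫⁻ x in s, f x ∂μ := lintegral_mono_set (iUnion₂_subset hAs)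

/-! ### Elliptic matrices and the Pucci operator -/

/-- The pointwise ellipticity condition with constant `ν`: `UnifParabolic ν a Q` says that
`IsElliptic ν (a X)` for all `X ∈ Q`. -/
def IsElliptic (ν : ℝ) (a : Matrix (Fin n) (Fin n) ℝ) : Prop :=
  (∀ ξ : Fin n → ℝ, ν⁻¹ * (∑ i, ξ i ^ 2) ≤ ∑ i, ∑ j, a i j * ξ i * ξ j) ∧
    (∑ i, ∑ j, (a i j) ^ 2) ≤ ν ^ 2

/-- The full contraction `Σ a_ij B(e_i, e_j)`; applied to a Hessian it is `Σ a_ij D_ij`. -/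
def contract (a : Matrix (Fin n) (Fin n) ℝ) : (En n →L[ℝ] En n →L[ℝ] ℝ) →ₗ[ℝ] ℝ where
  toFun B := ∑ i, ∑ j, a i j * B (EuclideanSpace.single i 1) (EuclideanSpace.single j 1)
  map_add' B B' := by simp only [add_apply, mul_add, Finset.sum_add_distrib]
  map_smul' c B := by
    simp only [smul_apply, smul_eq_mul, Finset.mul_sum, RingHom.id_apply, mul_left_comm]

theorem contract_apply (a : Matrix (Fin n) (Fin n) ℝ) (B : En n →L[ℝ] En n →L[ℝ] ℝ) :
    contract a B =
      ∑ i, ∑ j, a i j * B (EuclideanSpace.single i 1) (EuclideanSpace.single j 1) := rfl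

/-- The inner product as a continuous bilinear form (`innerSL ℝ` is only semilinear in its
first variable). -/
def innerForm (n : ℕ) : En n →L[ℝ] En n →L[ℝ] ℝ := innerSL ℝ

@[simp] theorem innerForm_apply (x y : En n) : innerForm n x y = ⟪x, y⟫ := rfl

@[simp] theorem norm_innerForm_apply (x : En n) : ‖innerForm n x‖ = ‖x‖ := innerSL_apply_norm ℝ x

/-- The rank-one form `x ⊗ x`. -/
def dyad (x : En n) : En n →L[ℝ] En n →L[ℝ] ℝ := (innerForm n x).smulRight (innerForm n x)

@[simp] theorem dyad_apply (x ξ ζ : En n) : dyad x ξ ζ = ⟪x, ξ⟫ * ⟪x, ζ⟫ := by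
  simp [dyad]

theorem continuous_dyad : Continuous (dyad : En n → En n →L[ℝ] En n →L[ℝ] ℝ) :=
  ((ContinuousLinearMap.smulRightL ℝ (En n) (En n →L[ℝ] ℝ)).continuous.comp
    (innerForm n).continuous).clm_apply (innerForm n).continuous

theorem contract_dyad (a : Matrix (Fin n) (Fin n) ℝ) (x : En n) :
    contract a (dyad x) = ∑ i, ∑ j, a i j * x i * x j := by
  simp only [contract_apply, dyad_apply, EuclideanSpace.inner_single_right, one_mul,
    conj_trivial, mul_assoc]

theorem contract_innerForm (a : Matrix (Fin n) (Fin n) ℝ) :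
    contract a (innerForm n) = ∑ i, a i i := by
  simp [contract_apply, EuclideanSpace.inner_single_right]

theorem bilinear_ext_single {B B' : En n →L[ℝ] En n →L[ℝ] ℝ}
    (h : ∀ i j, B (EuclideanSpace.single i 1) (EuclideanSpace.single j 1) =
      B' (EuclideanSpace.single i 1) (EuclideanSpace.single j 1)) : B = B' := by
  refine ContinuousLinearMap.coe_injective ((EuclideanSpace.basisFun (Fin n) ℝ).toBasis.ext
    fun i => ContinuousLinearMap.coe_injective
      ((EuclideanSpace.basisFun (Fin n) ℝ).toBasis.ext fun j => ?_))
  simpa using h i j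

theorem exists_eq_sum_dyad {B : En n →L[ℝ] En n →L[ℝ] ℝ} (hs : ∀ ξ ζ, B ξ ζ = B ζ ξ)
    (hB : ∀ ξ, 0 ≤ B ξ ξ) : ∃ (m : ℕ) (c : Fin m → En n), B = ∑ k, dyad (c k) := by
  let N : Matrix (Fin n) (Fin n) ℝ :=
    .of fun i j => B (EuclideanSpace.single i 1) (EuclideanSpace.single j 1)
  have hN : N.PosSemidef := by
    refine Matrix.PosSemidef.of_dotProduct_mulVec_nonneg (by ext i j; exact hs _ _) fun x => ?_
    have hx : WithLp.toLp 2 x = ∑ i, x i • EuclideanSpace.single i (1 : ℝ) := by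
      simpa using ((EuclideanSpace.basisFun (Fin n) ℝ).sum_repr (WithLp.toLp 2 x)).symm
    have hxN : star x ⬝ᵥ N.mulVec x = B (WithLp.toLp 2 x) (WithLp.toLp 2 x) := by
      rw [hx]
      simp only [map_sum, map_smul, sum_apply, smul_apply, smul_eq_mul, dotProduct,
        Matrix.mulVec, N, Matrix.of_apply, star_trivial, Finset.mul_sum]
      refine Finset.sum_congr rfl fun i _ => Finset.sum_congr rfl fun j _ => ?_
      rw [hs, mul_comm (_ : ℝ) (x j)]
    rw [hxN]
    exact hB _
  obtain ⟨m, C, hC⟩ := Matrix.posSemidef_iff_eq_sum_vecMulVec.1 hN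
  refine ⟨m, fun k => WithLp.toLp 2 (C k), bilinear_ext_single fun i j => ?_⟩
  have hij : N i j = _ := congrFun₂ hC i j
  simpa [N, Matrix.sum_apply, Matrix.vecMulVec_apply, EuclideanSpace.inner_single_right] using hij

namespace IsElliptic

variable {ν : ℝ} {a : Matrix (Fin n) (Fin n) ℝ}

theorem inv_mul_norm_sq_le_contract_dyad (ha : IsElliptic ν a) (x : En n) :
    ν⁻¹ * ‖x‖ ^ 2 ≤ contract a (dyad x) := by
  simpa [contract_dyad, EuclideanSpace.norm_sq_eq] using ha.1 x

theorem abs_apply_le (hν : 0 < ν) (ha : IsElliptic ν a) (i j : Fin n) : |a i j| ≤ ν := by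
  refine abs_le_of_sq_le_sq (le_trans ?_ ha.2) hν.le
  calc a i j ^ 2 ≤ ∑ j, a i j ^ 2 :=
        Finset.single_le_sum (f := fun j => a i j ^ 2) (fun _ _ => sq_nonneg _) (Finset.mem_univ j)
    _ ≤ ∑ i, ∑ j, a i j ^ 2 := Finset.single_le_sum (f := fun i => ∑ j, a i j ^ 2)
        (fun _ _ => Finset.sum_nonneg fun _ _ => sq_nonneg _) (Finset.mem_univ i)

theorem contract_innerForm_le (hν : 0 < ν) (ha : IsElliptic ν a) :
    contract a (innerForm n) ≤ n * ν := by
  rw [contract_innerForm]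
  simpa using Finset.sum_le_sum fun i (_ : i ∈ Finset.univ) =>
    (abs_le.1 (ha.abs_apply_le hν i i)).2

theorem apply_self_le (hν : 0 < ν) (ha : IsElliptic ν a) {B : En n →L[ℝ] En n →L[ℝ] ℝ}
    (hs : ∀ ξ ζ, B ξ ζ = B ζ ξ) (hB : ∀ ξ, 0 ≤ B ξ ξ) (ξ : En n) :
    B ξ ξ ≤ ν * contract a B * ‖ξ‖ ^ 2 := by
  obtain ⟨m, c, rfl⟩ := exists_eq_sum_dyad hs hB
  have hc : ∑ k, ‖c k‖ ^ 2 ≤ ν * contract a (∑ k, dyad (c k)) := by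
    rw [map_sum, Finset.mul_sum]
    exact Finset.sum_le_sum fun k _ =>
      (inv_mul_le_iff₀ hν).1 (ha.inv_mul_norm_sq_le_contract_dyad (c k))
  calc (∑ k, dyad (c k)) ξ ξ = ∑ k, ⟪c k, ξ⟫ ^ 2 := by simp [sum_apply, sq]
    _ ≤ ∑ k, ‖c k‖ ^ 2 * ‖ξ‖ ^ 2 := Finset.sum_le_sum fun k _ => by
        rw [← mul_pow, ← sq_abs]
        exact pow_le_pow_left₀ (abs_nonneg _) (abs_real_inner_le_norm _ _) 2
    _ ≤ ν * contract a (∑ k, dyad (c k)) * ‖ξ‖ ^ 2 := by rw [← Finset.sum_mul]; gcongr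

end IsElliptic

theorem isCompact_setOf_isElliptic (n : ℕ) {ν : ℝ} (hν : 0 < ν) :
    IsCompact {a : Matrix (Fin n) (Fin n) ℝ | IsElliptic ν a} := by
  have hbox : IsCompact (Set.pi univ fun _ : Fin n => Set.pi univ fun _ : Fin n => Icc (-ν) ν) :=
    isCompact_univ_pi fun _ => isCompact_univ_pi fun _ => isCompact_Icc
  refine hbox.of_isClosed_subset ?_ fun a ha i _ j _ => abs_le.1 (ha.abs_apply_le hν i j)
  simp only [IsElliptic, Set.ofPred_and, Set.ofPred_forall]
  exact .inter (isClosed_iInter fun ξ => isClosed_le (by fun_prop) (by fun_prop))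
    (isClosed_le (by fun_prop) (by fun_prop))

/-- The Pucci maximal operator `sup Σ a_ij B_ij` over the matrices with ellipticity constant
`ν`. -/
def pucciSup (ν : ℝ) (B : En n →L[ℝ] En n →L[ℝ] ℝ) : ℝ :=
  sSup ((fun a => contract a B) '' {a | IsElliptic ν a})

theorem continuous_contract : Continuous fun q : (En n →L[ℝ] En n →L[ℝ] ℝ) ×
    Matrix (Fin n) (Fin n) ℝ => contract q.2 q.1 := by
  simp only [contract_apply]
  fun_prop

section Pucci

variable {ν : ℝ} (hν : 0 < ν)
include hν

theorem continuous_pucciSup : Continuous (pucciSup (n := n) ν) :=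
  (isCompact_setOf_isElliptic n hν).continuous_sSup continuous_contract

theorem contract_le_pucciSup {a : Matrix (Fin n) (Fin n) ℝ} (ha : IsElliptic ν a)
    (B : En n →L[ℝ] En n →L[ℝ] ℝ) : contract a B ≤ pucciSup ν B :=
  le_csSup ((isCompact_setOf_isElliptic n hν).image
    (continuous_contract.comp (.prodMk_right B))).bddAbove ⟨a, ha, rfl⟩

theorem exists_pucciSup_eq_contract
    (hne : {a : Matrix (Fin n) (Fin n) ℝ | IsElliptic ν a}.Nonempty)
    (B : En n →L[ℝ] En n →L[ℝ] ℝ) : ∃ a, IsElliptic ν a ∧ pucciSup ν B = contract a B :=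
  (isCompact_setOf_isElliptic n hν).exists_sSup_image_eq hne
    (continuous_contract.comp (.prodMk_right B)).continuousOn

end Pucci

/-! ### Slopes of contact planes -/

/-- The closed cylinder `closedBall x₀ R × [t₀, t₁]`. -/
def closedCyl {E : Type*} [PseudoMetricSpace E] (x₀ : E) (R t₀ t₁ : ℝ) : Set (E × ℝ) :=
  closedBall x₀ R ×ˢ Icc t₀ t₁

theorem isCompact_closedCyl {E : Type*} [PseudoMetricSpace E] [ProperSpace E] (x₀ : E)
    (R t₀ t₁ : ℝ) : IsCompact (closedCyl x₀ R t₀ t₁) :=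
  (isCompact_closedBall _ _).prod isCompact_Icc

section Jet

variable {E : Type*} [NormedAddCommGroup E] [NormedSpace ℝ E]

/-- `w` has spatial gradient `g`, spatial Hessian `H` and time derivative `wt` at every point of
`Q`, with `w` and `H` continuous on `Q`. Derivatives are two-sided, so `w` must also be regular
near the boundary points of `Q`. -/
structure HasParabolicJet (w : E × ℝ → ℝ) (g : E × ℝ → E →L[ℝ] ℝ)
    (H : E × ℝ → E →L[ℝ] E →L[ℝ] ℝ) (wt : E × ℝ → ℝ) (Q : Set (E × ℝ)) : Prop where
  cont : ContinuousOn w Q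
  grad : ∀ X ∈ Q, HasFDerivAt (fun x => w (x, X.2)) (g X) X.1
  hess : ∀ X ∈ Q, HasFDerivAt (fun x => g (x, X.2)) (H X) X.1
  time : ∀ X ∈ Q, HasDerivAt (fun t => w (X.1, t)) (wt X) X.2
  hess_cont : ContinuousOn H Q
  hess_symm : ∀ X ∈ Q, ∀ ξ ζ, H X ξ ζ = H X ζ ξ

namespace HasParabolicJet

variable {w w' : E × ℝ → ℝ} {g g' : E × ℝ → E →L[ℝ] ℝ} {H H' : E × ℝ → E →L[ℝ] E →L[ℝ] ℝ}
  {wt wt' : E × ℝ → ℝ} {Q Q' : Set (E × ℝ)} {x₀ : E} {R t₀ t₁ : ℝ}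

theorem sub (h : HasParabolicJet w g H wt Q) (h' : HasParabolicJet w' g' H' wt' Q) :
    HasParabolicJet (w - w') (g - g') (H - H') (wt - wt') Q where
  cont := h.cont.sub h'.cont
  grad X hX := (h.grad X hX).sub (h'.grad X hX)
  hess X hX := (h.hess X hX).sub (h'.hess X hX)
  time X hX := (h.time X hX).sub (h'.time X hX)
  hess_cont := h.hess_cont.sub h'.hess_cont
  hess_symm X hX ξ ζ := by simp [h.hess_symm X hX ξ ζ, h'.hess_symm X hX ξ ζ]

theorem mono (h : HasParabolicJet w g H wt Q) (hQ : Q' ⊆ Q) : HasParabolicJet w g H wt Q' where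
  cont := h.cont.mono hQ
  grad X hX := h.grad X (hQ hX)
  hess X hX := h.hess X (hQ hX)
  time X hX := h.time X (hQ hX)
  hess_cont := h.hess_cont.mono hQ
  hess_symm X hX := h.hess_symm X (hQ hX)

end HasParabolicJet

theorem add_add_half_le_of_le_second_deriv {f f' f'' : ℝ → ℝ} {L : ℝ}
    (hf : ∀ τ ∈ Icc (0 : ℝ) 1, HasDerivAt f (f' τ) τ)
    (hf' : ∀ τ ∈ Icc (0 : ℝ) 1, HasDerivAt f' (f'' τ) τ)
    (hL : ∀ τ ∈ Icc (0 : ℝ) 1, L ≤ f'' τ) : f 0 + f' 0 + L / 2 ≤ f 1 := by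
  have mono : ∀ h h' : ℝ → ℝ, (∀ τ ∈ Icc (0 : ℝ) 1, HasDerivAt h (h' τ) τ) →
      (∀ τ ∈ Icc (0 : ℝ) 1, 0 ≤ h' τ) → MonotoneOn h (Icc 0 1) := fun h h' hh hnn =>
    monotoneOn_of_hasDerivWithinAt_nonneg (convex_Icc 0 1)
      (fun τ hτ => (hh τ hτ).continuousAt.continuousWithinAt)
      (fun τ hτ => (hh τ (interior_subset hτ)).hasDerivWithinAt)
      (fun τ hτ => hnn τ (interior_subset hτ))
  have hslope : ∀ τ ∈ Icc (0 : ℝ) 1, f' 0 + L * τ ≤ f' τ := by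
    intro τ hτ
    have hm := mono (fun τ => f' τ - L * τ) (fun τ => f'' τ - L * 1)
      (fun τ hτ => (hf' τ hτ).sub ((hasDerivAt_id τ).const_mul L))
      (fun τ hτ => by linarith [hL τ hτ]) ⟨le_rfl, zero_le_one⟩ hτ hτ.1
    simp only [mul_zero, sub_zero] at hm
    linarith
  have hm := mono (fun τ => f τ - (f' 0 * τ + L * τ ^ 2 / 2))
    (fun τ => f' τ - (f' 0 * 1 + L * (2 * τ) / 2))
    (fun τ hτ => (hf τ hτ).sub (((hasDerivAt_id τ).const_mul _).add
      (((by simpa using hasDerivAt_pow 2 τ : HasDerivAt (fun τ : ℝ => τ ^ 2) (2 * τ) τ).const_mul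
        L).div_const 2)))
    (fun τ hτ => by linarith [hslope τ hτ]) ⟨le_rfl, zero_le_one⟩ ⟨zero_le_one, le_rfl⟩ zero_le_one
  norm_num at hm
  linarith

theorem add_add_half_le_of_le_hessian {f : E → ℝ} {g : E → E →L[ℝ] ℝ}
    {H : E → E →L[ℝ] E →L[ℝ] ℝ} {x e : E} {L : ℝ}
    (hg : ∀ τ ∈ Icc (0 : ℝ) 1, HasFDerivAt f (g (x + τ • e)) (x + τ • e))
    (hH : ∀ τ ∈ Icc (0 : ℝ) 1, HasFDerivAt g (H (x + τ • e)) (x + τ • e))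
    (hL : ∀ τ ∈ Icc (0 : ℝ) 1, L ≤ H (x + τ • e) e e) : f x + g x e + L / 2 ≤ f (x + e) := by
  have hline : ∀ τ : ℝ, HasDerivAt (fun τ : ℝ => x + τ • e) e τ := fun τ => by
    simpa using ((hasDerivAt_id τ).smul_const e).const_add x
  have key := add_add_half_le_of_le_second_deriv (f := fun τ => f (x + τ • e))
    (f' := fun τ => g (x + τ • e) e) (f'' := fun τ => H (x + τ • e) e e)
    (fun τ hτ => (hg τ hτ).comp_hasDerivAt τ (hline τ))
    (fun τ hτ => ((ContinuousLinearMap.apply ℝ ℝ e).hasFDerivAt).comp_hasDerivAt τ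
      ((hH τ hτ).comp_hasDerivAt τ (hline τ))) hL
  simpa using key

theorem HasParabolicJet.exists_taylor_le [ProperSpace E] {w : E × ℝ → ℝ}
    {g : E × ℝ → E →L[ℝ] ℝ} {H : E × ℝ → E →L[ℝ] E →L[ℝ] ℝ} {wt : E × ℝ → ℝ} {x₀ : E}
    {R t₀ t₁ : ℝ} (h : HasParabolicJet w g H wt (closedCyl x₀ R t₀ t₁)) {η : ℝ} (hη : 0 < η) :
    ∃ d > 0, ∀ x z t, (x, t) ∈ closedCyl x₀ R t₀ t₁ → (z, t) ∈ closedCyl x₀ R t₀ t₁ →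
      dist z x < d → w (x, t) + g (x, t) (z - x) +
        (H (x, t) (z - x) (z - x) - η * ‖z - x‖ ^ 2) / 2 ≤ w (z, t) := by
  obtain ⟨d, hd, hu⟩ := Metric.uniformContinuousOn_iff.1
    ((isCompact_closedCyl x₀ R t₀ t₁).uniformContinuousOn_of_continuous h.hess_cont) η hη
  refine ⟨d, hd, fun x z t hx hz hxz => ?_⟩
  set e := z - x with he
  have hseg : ∀ τ ∈ Icc (0 : ℝ) 1, (x + τ • e, t) ∈ closedCyl x₀ R t₀ t₁ := fun τ hτ =>
    ⟨(convex_closedBall x₀ R).add_smul_sub_mem hx.1 hz.1 hτ, hx.2⟩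
  have hosc : ∀ τ ∈ Icc (0 : ℝ) 1, ‖H (x + τ • e, t) - H (x, t)‖ ≤ η := by
    intro τ hτ
    rw [← dist_eq_norm]
    refine (hu _ (hseg τ hτ) _ hx ?_).le
    rw [dist_eq_norm] at hxz
    rw [Prod.dist_eq, dist_self, max_lt_iff, dist_eq_norm, add_sub_cancel_left, norm_smul,
      Real.norm_of_nonneg hτ.1]
    exact ⟨(mul_le_of_le_one_left (norm_nonneg _) hτ.2).trans_lt hxz, hd⟩
  have hlow : ∀ τ ∈ Icc (0 : ℝ) 1, H (x, t) e e - η * ‖e‖ ^ 2 ≤ H (x + τ • e, t) e e := by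
    intro τ hτ
    have habs : |(H (x + τ • e, t) - H (x, t)) e e| ≤ η * ‖e‖ ^ 2 := by
      rw [← Real.norm_eq_abs, sq, ← mul_assoc]
      exact (ContinuousLinearMap.le_opNorm₂ _ _ _).trans (by gcongr; exact hosc τ hτ)
    simp only [sub_apply] at habs
    linarith [(abs_le.1 habs).1]
  simpa [he] using add_add_half_le_of_le_hessian (f := fun x => w (x, t)) (g := fun x => g (x, t))
    (H := fun x => H (x, t)) (fun τ hτ => h.grad _ (hseg τ hτ)) (fun τ hτ => h.hess _ (hseg τ hτ))
    hlow

end Jet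

section Contact

variable {E : Type*} [NormedAddCommGroup E] [InnerProductSpace ℝ E]

/-- `X` is a contact point over `Q` of the graph of `w` with an affine function of `x` alone, of
slope `p` with `‖p‖ ≤ σ`, lying above the graph. -/
def IsContact (w : E × ℝ → ℝ) (Q : Set (E × ℝ)) (σ : ℝ) (X : E × ℝ) (p : E) : Prop :=
  ‖p‖ ≤ σ ∧ X ∈ Q ∧ IsMaxOn (fun Z => w Z - ⟪p, Z.1⟫) Q X

/-- The relation between the spatial parts of contact points and the contact slopes. -/
def contactRel (w : E × ℝ → ℝ) (Q : Set (E × ℝ)) (σ : ℝ) : Set (E × E) :=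
  {q | ∃ t, IsContact w Q σ (q.1, t) q.2}

/-- The spatial parts of the contact points. -/
def contactSet (w : E × ℝ → ℝ) (Q : Set (E × ℝ)) (σ : ℝ) : Set E :=
  Prod.fst '' contactRel w Q σ

variable {w : E × ℝ → ℝ} {Q : Set (E × ℝ)} {σ : ℝ} {X : E × ℝ} {p : E}

theorem IsContact.mem_contactSet (hc : IsContact w Q σ X p) : X.1 ∈ contactSet w Q σ :=
  ⟨(X.1, p), ⟨X.2, hc⟩, rfl⟩

theorem isCompact_contactRel [ProperSpace E] (hQ : IsCompact Q) (hw : ContinuousOn w Q) :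
    IsCompact (contactRel w Q σ) := by
  let B : Set ((E × ℝ) × E) := Q ×ˢ closedBall 0 σ
  let T : Set ((E × ℝ) × E) := B ∩ ⋂ Z ∈ Q, {q ∈ B | w Z - ⟪q.2, Z.1⟫ ≤ w q.1 - ⟪q.2, q.1.1⟫}
  have hB : IsCompact B := hQ.prod (isCompact_closedBall _ _)
  have hT : IsCompact T := hB.inter_right <| isClosed_biInter fun Z _ =>
    hB.isClosed.isClosed_le (by fun_prop)
      ((hw.comp (by fun_prop) fun q hq => hq.1).sub (by fun_prop))
  have hrel : contactRel w Q σ = (fun q : (E × ℝ) × E => (q.1.1, q.2)) '' T := by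
    ext ⟨x, p⟩
    constructor
    · rintro ⟨t, hp, hX, hmax⟩
      have hb : ((x, t), p) ∈ B := ⟨hX, by simpa using hp⟩
      exact ⟨((x, t), p), ⟨hb, mem_iInter₂.2 fun Z hZ => ⟨hb, hmax hZ⟩⟩, rfl⟩
    · rintro ⟨⟨⟨x', t⟩, p'⟩, ⟨hb, hmax⟩, he⟩
      obtain ⟨rfl, rfl⟩ := Prod.mk.inj he
      exact ⟨t, by simpa using hb.2, hb.1, fun Z hZ => (mem_iInter₂.1 hmax Z hZ).2⟩
  rw [hrel]
  exact hT.image (by fun_prop)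

theorem isCompact_contactSet [ProperSpace E] (hQ : IsCompact Q) (hw : ContinuousOn w Q) :
    IsCompact (contactSet w Q σ) :=
  (isCompact_contactRel hQ hw).image continuous_fst

theorem closedBall_subset_image_snd_contactRel (hQ : IsCompact Q) (hne : Q.Nonempty)
    (hw : ContinuousOn w Q) : closedBall 0 σ ⊆ Prod.snd '' contactRel w Q σ := by
  intro p hp
  obtain ⟨X, hX, hmax⟩ := hQ.exists_isMaxOn hne
    (hw.sub (g := fun Z => ⟪p, Z.1⟫) (by fun_prop))
  exact ⟨(X.1, p), ⟨X.2, by simpa using hp, hX, hmax⟩, rfl⟩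

theorem IsContact.sub_le {x₀ : E} {R t₀ t₁ : ℝ} (hc : IsContact w (closedCyl x₀ R t₀ t₁) σ X p)
    {Z : E × ℝ} (hZ : Z ∈ closedCyl x₀ R t₀ t₁) : w Z - σ * (2 * R) ≤ w X := by
  have hmax := hc.2.2 hZ
  have hdist : ‖Z.1 - X.1‖ ≤ 2 * R := by
    rw [← dist_eq_norm]
    linarith [dist_triangle_right Z.1 X.1 x₀, mem_closedBall.1 hZ.1, mem_closedBall.1 hc.2.1.1]
  have hinner : ⟪p, Z.1 - X.1⟫ ≤ σ * (2 * R) := (real_inner_le_norm _ _).trans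
    (mul_le_mul hc.1 hdist (norm_nonneg _) ((norm_nonneg _).trans hc.1))
  simp only [mem_ofPred_eq, inner_sub_right] at hmax hinner
  linarith

/- The contact plane with slope `p₁` is tested at the point `z` at distance `d` from `X₁` in the
direction `p₀ - p₁`, but at the time of `X₀`. Comparing the two maximum properties, the values of
`w` at `X₀` and `X₁` cancel: no regularity in time is needed. -/
theorem IsContact.dist_slope_le {X₀ X₁ : E × ℝ} {p₀ p₁ : E} {c d : ℝ}
    (hc₀ : IsContact w Q σ X₀ p₀) (hc₁ : IsContact w Q σ X₁ p₁) (hd : 0 < d) (hc : 0 ≤ c)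
    (hdist : dist X₁.1 X₀.1 ≤ d) (hQ : ∀ z ∈ closedBall X₁.1 d, (z, X₀.2) ∈ Q)
    (hT : ∀ z ∈ closedBall X₁.1 d,
      w X₀ + ⟪p₀, z - X₀.1⟫ - c / 2 * ‖z - X₀.1‖ ^ 2 ≤ w (z, X₀.2)) :
    dist p₁ p₀ ≤ 2 * c * d := by
  rcases eq_or_ne p₁ p₀ with rfl | hne
  · rw [dist_self]; positivity
  have hN : 0 < ‖p₀ - p₁‖ := norm_pos_iff.2 (sub_ne_zero.2 hne.symm)
  set e : E := ‖p₀ - p₁‖⁻¹ • (p₀ - p₁) with he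
  have he1 : ‖e‖ = 1 := by rw [he, norm_smul, norm_inv, norm_norm, inv_mul_cancel₀ hN.ne']
  have hpe : ⟪p₀, e⟫ - ⟪p₁, e⟫ = ‖p₀ - p₁‖ := by
    rw [← inner_sub_left, he, inner_smul_right, real_inner_self_eq_norm_sq]
    field_simp
  have hz₁ : dist (X₁.1 + d • e) X₁.1 = d := by
    rw [dist_eq_norm, add_sub_cancel_left, norm_smul, he1, Real.norm_of_nonneg hd.le, mul_one]
  have hz₀ : ‖X₁.1 + d • e - X₀.1‖ ≤ 2 * d := by
    rw [← dist_eq_norm]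
    linarith [dist_triangle (X₁.1 + d • e) X₁.1 X₀.1]
  have hz := mem_closedBall.2 hz₁.le
  have htaylor := hT _ hz
  have hmax₁ := hc₁.2.2 (hQ _ hz)
  have hmax₀ := hc₀.2.2 hc₁.2.1
  have hsq : c / 2 * ‖X₁.1 + d • e - X₀.1‖ ^ 2 ≤ c / 2 * (2 * d) ^ 2 := by gcongr
  simp only [mem_ofPred_eq, inner_add_right, inner_sub_right, inner_smul_right]
    at htaylor hmax₁ hmax₀
  have hfin : d * ‖p₀ - p₁‖ ≤ d * (2 * c * d) := by
    rw [← hpe]; nlinarith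
  rw [dist_comm, dist_eq_norm]
  exact le_of_mul_le_mul_left hfin hd

variable {g : E × ℝ → E →L[ℝ] ℝ} {H : E × ℝ → E →L[ℝ] E →L[ℝ] ℝ} {wt : E × ℝ → ℝ}
  {x₀ : E} {R t₀ t₁ : ℝ}

theorem IsContact.grad_apply (h : HasParabolicJet w g H wt (closedCyl x₀ R t₀ t₁))
    (hc : IsContact w (closedCyl x₀ R t₀ t₁) σ X p) (hX : X.1 ∈ ball x₀ R) (ξ : E) :
    g X ξ = ⟪p, ξ⟫ := by
  have hmax : IsLocalMax (fun z => w (z, X.2) - ⟪p, z⟫) X.1 := by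
    filter_upwards [isOpen_ball.mem_nhds hX] with z hz
    exact hc.2.2 (show (z, X.2) ∈ closedCyl x₀ R t₀ t₁ from
      ⟨ball_subset_closedBall hz, hc.2.1.2⟩)
  have hd : HasFDerivAt (fun z => w (z, X.2) - ⟪p, z⟫) (g X - innerSL ℝ p) X.1 :=
    (h.grad _ hc.2.1).sub (innerSL ℝ p).hasFDerivAt
  simpa [sub_eq_zero] using congr($(hmax.hasFDerivAt_eq_zero hd) ξ)

theorem IsContact.zero_le_time (h : HasParabolicJet w g H wt (closedCyl x₀ R t₀ t₁))
    (hc : IsContact w (closedCyl x₀ R t₀ t₁) σ X p) (ht : t₀ < X.2) : 0 ≤ wt X := by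
  have hd := (h.time _ hc.2.1).hasDerivWithinAt (s := Iio X.2)
  rw [hasDerivWithinAt_iff_tendsto_slope' (by simp)] at hd
  refine ge_of_tendsto hd ?_
  filter_upwards [Ioo_mem_nhdsLT ht] with τ hτ
  have hmax := hc.2.2 (show (X.1, τ) ∈ closedCyl x₀ R t₀ t₁ from
    ⟨hc.2.1.1, hτ.1.le, hτ.2.le.trans hc.2.1.2.2⟩)
  simp only [mem_ofPred_eq, tsub_le_iff_right, sub_add_cancel] at hmax
  rw [slope_def_field]
  exact div_nonneg_of_nonpos (by linarith) (by linarith [hτ.2])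

variable [ProperSpace E]

theorem IsContact.hess_apply_nonpos (h : HasParabolicJet w g H wt (closedCyl x₀ R t₀ t₁))
    (hc : IsContact w (closedCyl x₀ R t₀ t₁) σ X p) (hX : X.1 ∈ ball x₀ R) (ξ : E) :
    H X ξ ξ ≤ 0 := by
  suffices hη : ∀ η > 0, H X ξ ξ ≤ η * ‖ξ‖ ^ 2 by
    have hlim : Tendsto (fun η : ℝ => η * ‖ξ‖ ^ 2) (𝓝[>] 0) (𝓝 (0 * ‖ξ‖ ^ 2)) :=
      ((continuous_id.mul continuous_const).tendsto _).mono_left nhdsWithin_le_nhds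
    rw [zero_mul] at hlim
    exact ge_of_tendsto hlim (eventually_mem_nhdsWithin.mono hη)
  intro η hη
  obtain ⟨d, hd, hT⟩ := h.exists_taylor_le hη
  have hline : Tendsto (fun s : ℝ => X.1 + s • ξ) (𝓝[>] 0) (𝓝 X.1) := by
    have hcont : Continuous fun s : ℝ => X.1 + s • ξ := by fun_prop
    simpa using (hcont.tendsto 0).mono_left nhdsWithin_le_nhds
  obtain ⟨s, ⟨hsX, hsd⟩, hs⟩ := ((hline.eventually (inter_mem (isOpen_ball.mem_nhds hX)
    (ball_mem_nhds X.1 hd))).and eventually_mem_nhdsWithin).exists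
  have hz : (X.1 + s • ξ, X.2) ∈ closedCyl x₀ R t₀ t₁ := ⟨ball_subset_closedBall hsX, hc.2.1.2⟩
  have htaylor := hT X.1 (X.1 + s • ξ) X.2 hc.2.1 hz hsd
  have hmax := hc.2.2 hz
  simp only [mem_ofPred_eq, Prod.mk.eta, add_sub_cancel_left, hc.grad_apply h hX, inner_add_right,
    map_smul, smul_apply, smul_eq_mul, norm_smul, mul_pow, Real.norm_eq_abs, sq_abs,
    inner_smul_right] at htaylor hmax
  have hs2 : 0 < s ^ 2 := pow_pos hs 2
  have hle : s ^ 2 * H X ξ ξ ≤ s ^ 2 * (η * ‖ξ‖ ^ 2) := by linarith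
  exact le_of_mul_le_mul_left hle hs2

theorem exists_dist_slope_le (h : HasParabolicJet w g H wt (closedCyl x₀ R t₀ t₁)) {k : E → ℝ}
    (hk0 : ∀ x ∈ closedBall x₀ R, 0 ≤ k x)
    (hball : contactSet w (closedCyl x₀ R t₀ t₁) σ ⊆ ball x₀ R)
    (hH : ∀ X p, IsContact w (closedCyl x₀ R t₀ t₁) σ X p → ∀ ξ, -H X ξ ξ ≤ k X.1 * ‖ξ‖ ^ 2)
    {η : ℝ} (hη : 0 < η) :
    ∃ d > 0, ∀ q ∈ contactRel w (closedCyl x₀ R t₀ t₁) σ,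
      ∀ q' ∈ contactRel w (closedCyl x₀ R t₀ t₁) σ, dist q.1 q'.1 < d →
      dist q.2 q'.2 ≤ (2 * k q'.1 + η) * dist q.1 q'.1 := by
  obtain ⟨dT, hdT, hT⟩ := h.exists_taylor_le (half_pos hη)
  obtain ⟨ρ, hρ, hρball⟩ := (isCompact_contactSet (isCompact_closedCyl x₀ R t₀ t₁)
    h.cont).exists_cthickening_subset_open isOpen_ball hball
  refine ⟨min (dT / 2) ρ, lt_min (half_pos hdT) hρ, ?_⟩
  rintro ⟨x₁, p₁⟩ ⟨s₁, hc₁⟩ ⟨x₀', p₀⟩ ⟨s₀, hc₀⟩ hdist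
  have hx₀ : x₀' ∈ ball x₀ R := hball hc₀.mem_contactSet
  have hkx := hk0 _ hc₀.2.1.1
  have hle : ∀ d ∈ Ioo (dist x₁ x₀') (min (dT / 2) ρ),
      dist p₁ p₀ ≤ 2 * (k x₀' + η / 2) * d := by
    rintro d ⟨hd, hd'⟩
    have hQ : ∀ z ∈ closedBall x₁ d, (z, s₀) ∈ closedCyl x₀ R t₀ t₁ := fun z hz =>
      ⟨ball_subset_closedBall (hρball (mem_cthickening_of_dist_le _ x₁ _ _ hc₁.mem_contactSet
        ((mem_closedBall.1 hz).trans (hd'.le.trans (min_le_right _ _))))), hc₀.2.1.2⟩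
    refine hc₀.dist_slope_le hc₁ (dist_nonneg.trans_lt hd) (by dsimp only at hkx ⊢; positivity)
      hd.le hQ fun z hz => ?_
    have hzx : dist z x₀' < dT := by
      linarith [dist_triangle z x₁ x₀', mem_closedBall.1 hz, min_le_left (dT / 2) ρ]
    have htaylor := hT x₀' z s₀ hc₀.2.1 (hQ z hz) hzx
    rw [hc₀.grad_apply h hx₀] at htaylor
    have hHz := hH _ _ hc₀ (z - x₀')
    dsimp only at hHz ⊢
    linarith
  have hlim : Tendsto (fun d => 2 * (k x₀' + η / 2) * d) (𝓝[>] (dist x₁ x₀'))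
      (𝓝 (2 * (k x₀' + η / 2) * dist x₁ x₀')) :=
    ((continuous_const.mul continuous_id).tendsto _).mono_left nhdsWithin_le_nhds
  refine (ge_of_tendsto hlim (eventually_of_mem (Ioo_mem_nhdsGT hdist) hle)).trans_eq ?_
  ring

theorem addHaar_closedBall_le_lintegral_contactSet [FiniteDimensional ℝ E] [MeasurableSpace E]
    [BorelSpace E] (μ : Measure E) [μ.IsAddHaarMeasure]
    (h : HasParabolicJet w g H wt (closedCyl x₀ R t₀ t₁)) (hR : 0 ≤ R) (ht : t₀ ≤ t₁)
    {k : E → ℝ} (hk : ContinuousOn k (closedBall x₀ R)) (hk0 : ∀ x ∈ closedBall x₀ R, 0 ≤ k x)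
    (hball : contactSet w (closedCyl x₀ R t₀ t₁) σ ⊆ ball x₀ R)
    (hH : ∀ X p, IsContact w (closedCyl x₀ R t₀ t₁) σ X p → ∀ ξ, -H X ξ ξ ≤ k X.1 * ‖ξ‖ ^ 2) :
    μ (closedBall 0 σ) ≤ ∫⁻ x in contactSet w (closedCyl x₀ R t₀ t₁) σ,
      ENNReal.ofReal (2 * k x) ^ Module.finrank ℝ E ∂μ := by
  have hQ := isCompact_closedCyl x₀ R t₀ t₁
  have hne : (closedCyl x₀ R t₀ t₁).Nonempty := ⟨(x₀, t₀), mem_closedBall_self hR, le_rfl, ht⟩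
  refine (measure_mono (closedBall_subset_image_snd_contactRel hQ hne h.cont)).trans ?_
  exact addHaar_image_snd_le_lintegral_of_dist_le μ (isCompact_contactSet hQ h.cont)
    ((hk.mono (hball.trans ball_subset_closedBall)).const_smul (2 : ℝ))
    fun η hη => exists_dist_slope_le h hk0 hball hH hη

end Contact

/-! ### The measure estimate for supersolutions -/

/-- `v` is a nonnegative supersolution in the closed cylinder `closedBall x₀ R × [t₀, t₁]`, with a
drift whose size is bounded by the time-independent function `m`. The coefficient matrix is only
required pointwise, which makes the class insensitive to how the coefficients depend on `X`. -/
structure IsNonnegSupersolution (ν : ℝ) (m : En n → ℝ) (v : En n × ℝ → ℝ) (x₀ : En n)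
    (R t₀ t₁ : ℝ) : Prop where
  nonneg : ∀ X ∈ closedCyl x₀ R t₀ t₁, 0 ≤ v X
  drift_cont : ContinuousOn m (closedBall x₀ R)
  drift_nonneg : ∀ x ∈ closedBall x₀ R, 0 ≤ m x
  exists_jet : ∃ g H vt, HasParabolicJet v g H vt (closedCyl x₀ R t₀ t₁) ∧
    ∀ X ∈ closedCyl x₀ R t₀ t₁, ∃ a : Matrix (Fin n) (Fin n) ℝ, IsElliptic ν a ∧
      contract a (H X) - m X.1 * ‖g X‖ ≤ vt X

/-- `φ`, with the given derivatives, is a barrier for `v`: wherever it exceeds `v` we are inside the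
cylinder and above its bottom, `φ` is a subsolution for every elliptic matrix, and its gradient is
at most `L`. -/
structure IsBarrier (ν L : ℝ) (v φ : En n × ℝ → ℝ) (g : En n × ℝ → En n →L[ℝ] ℝ)
    (H : En n × ℝ → En n →L[ℝ] En n →L[ℝ] ℝ) (φt : En n × ℝ → ℝ) (x₀ : En n)
    (R t₀ t₁ : ℝ) : Prop where
  jet : HasParabolicJet φ g H φt (closedCyl x₀ R t₀ t₁)
  mem_ball : ∀ X ∈ closedCyl x₀ R t₀ t₁, v X < φ X → X.1 ∈ ball x₀ R
  lt_time : ∀ X ∈ closedCyl x₀ R t₀ t₁, v X < φ X → t₀ < X.2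
  subsolution : ∀ X ∈ closedCyl x₀ R t₀ t₁, v X < φ X → ∀ a, IsElliptic ν a →
    φt X ≤ contract a (H X)
  norm_grad_le : ∀ X ∈ closedCyl x₀ R t₀ t₁, v X < φ X → ‖g X‖ ≤ L

section Barrier

variable {ν L σ : ℝ} {m : En n → ℝ} {v φ : En n × ℝ → ℝ} {gφ : En n × ℝ → En n →L[ℝ] ℝ}
  {Hφ : En n × ℝ → En n →L[ℝ] En n →L[ℝ] ℝ} {φt : En n × ℝ → ℝ} {x₀ : En n} {R t₀ t₁ : ℝ}
  {X X₁ : En n × ℝ} {p : En n}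

theorem IsContact.lt_of_add_lt (hc : IsContact (φ - v) (closedCyl x₀ R t₀ t₁) σ X p)
    (hX₁ : X₁ ∈ closedCyl x₀ R t₀ t₁) (h : v X₁ + σ * (2 * R) < φ X₁) : v X < φ X := by
  have hle := hc.sub_le hX₁
  simp only [Pi.sub_apply] at hle
  linarith

theorem IsBarrier.neg_hess_le (hφ : IsBarrier ν L v φ gφ Hφ φt x₀ R t₀ t₁) (hν : 0 < ν)
    {g : En n × ℝ → En n →L[ℝ] ℝ} {H : En n × ℝ → En n →L[ℝ] En n →L[ℝ] ℝ} {vt : En n × ℝ → ℝ}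
    (hv : HasParabolicJet v g H vt (closedCyl x₀ R t₀ t₁))
    {a : Matrix (Fin n) (Fin n) ℝ} (ha : IsElliptic ν a) {μ : ℝ} (hμ : 0 ≤ μ)
    (hsup : contract a (H X) - μ * ‖g X‖ ≤ vt X)
    (hc : IsContact (φ - v) (closedCyl x₀ R t₀ t₁) σ X p) (hlt : v X < φ X) (ξ : En n) :
    -(Hφ - H) X ξ ξ ≤ ν * ((L + σ) * μ) * ‖ξ‖ ^ 2 := by
  have hX := hc.2.1
  have hw := hφ.jet.sub hv
  have hball := hφ.mem_ball X hX hlt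
  have hgrad : g X = gφ X - innerForm n p := by
    ext ζ
    have hζ := hc.grad_apply hw hball ζ
    simp only [Pi.sub_apply, sub_apply, innerForm_apply] at hζ ⊢
    linarith
  have hnorm : ‖g X‖ ≤ L + σ := by
    rw [hgrad]
    refine (norm_sub_le _ _).trans (add_le_add (hφ.norm_grad_le X hX hlt) ?_)
    exact (norm_innerForm_apply p).trans_le hc.1
  have htime : vt X ≤ φt X := sub_nonneg.1 (hc.zero_le_time hw (hφ.lt_time X hX hlt))
  have htr : contract a (H X - Hφ X) ≤ (L + σ) * μ := by
    have hsub := hφ.subsolution X hX hlt a ha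
    have hdrift := mul_le_mul_of_nonneg_left hnorm hμ
    rw [map_sub]
    linarith
  have hpsd : ∀ ζ, 0 ≤ (H X - Hφ X) ζ ζ := fun ζ => by
    have hζ := hc.hess_apply_nonpos hw hball ζ
    simp only [Pi.sub_apply, sub_apply] at hζ ⊢
    linarith
  calc -(Hφ - H) X ξ ξ = (H X - Hφ X) ξ ξ := by simp
    _ ≤ ν * contract a (H X - Hφ X) * ‖ξ‖ ^ 2 := ha.apply_self_le hν
        (fun ξ ζ => by simp [hv.hess_symm X hX ξ ζ, hφ.jet.hess_symm X hX ξ ζ]) hpsd ξ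
    _ ≤ ν * ((L + σ) * μ) * ‖ξ‖ ^ 2 := by gcongr

theorem IsBarrier.contactSet_subset_ball (hφ : IsBarrier ν L v φ gφ Hφ φt x₀ R t₀ t₁)
    (hX₁ : X₁ ∈ closedCyl x₀ R t₀ t₁) (hlt : v X₁ + σ * (2 * R) < φ X₁) :
    contactSet (φ - v) (closedCyl x₀ R t₀ t₁) σ ⊆ ball x₀ R := by
  refine image_subset_iff.2 fun q ⟨t, hc⟩ => ?_
  exact hφ.mem_ball (q.1, t) hc.2.1 (hc.lt_of_add_lt hX₁ hlt)

theorem IsBarrier.volume_closedBall_le (hφ : IsBarrier ν L v φ gφ Hφ φt x₀ R t₀ t₁) (hν : 0 < ν)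
    (hv : IsNonnegSupersolution ν m v x₀ R t₀ t₁) (hL : 0 ≤ L) (hσ : 0 ≤ σ)
    (hX₁ : X₁ ∈ closedCyl x₀ R t₀ t₁) (hlt : v X₁ + σ * (2 * R) < φ X₁) :
    volume (closedBall (0 : En n) σ) ≤ ENNReal.ofReal (2 * ν * (L + σ)) ^ n *
      ∫⁻ x in contactSet (φ - v) (closedCyl x₀ R t₀ t₁) σ, ENNReal.ofReal (m x) ^ n := by
  obtain ⟨g, H, vt, hjet, hsup⟩ := hv.exists_jet
  have hR : 0 ≤ R := dist_nonneg.trans (mem_closedBall.1 hX₁.1)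
  have hest := addHaar_closedBall_le_lintegral_contactSet volume (hφ.jet.sub hjet) hR
    (hX₁.2.1.trans hX₁.2.2) (k := fun x => ν * ((L + σ) * m x))
    ((hv.drift_cont.const_smul (L + σ)).const_smul ν)
    (fun x hx => mul_nonneg hν.le (mul_nonneg (by positivity) (hv.drift_nonneg x hx)))
    (hφ.contactSet_subset_ball hX₁ hlt) fun X p hc ξ => by
      obtain ⟨a, ha, hle⟩ := hsup X hc.2.1
      exact hφ.neg_hess_le hν hjet ha (hv.drift_nonneg _ hc.2.1.1) hle hc
        (hc.lt_of_add_lt hX₁ hlt) ξ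
  refine hest.trans_eq ?_
  rw [← lintegral_const_mul' _ _ (by finiteness), finrank_euclideanSpace_fin]
  refine lintegral_congr fun x => ?_
  rw [← mul_pow, ← ENNReal.ofReal_mul (by positivity)]
  congr 2
  ring

end Barrier

/-! ### Radial barriers -/

/-- The gradient `2 F₁ x` of `x ↦ F (‖x‖²)`, where `F₁ = F' (‖x‖²)`. -/
def radialGrad (F₁ : ℝ) (x : En n) : En n →L[ℝ] ℝ := (2 * F₁) • innerForm n x

/-- The Hessian `4 F₂ x ⊗ x + 2 F₁ I` of `x ↦ F (‖x‖²)`, where `F₁ = F' (‖x‖²)` and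
`F₂ = F'' (‖x‖²)`. -/
def radialHess (F₁ F₂ : ℝ) (x : En n) : En n →L[ℝ] En n →L[ℝ] ℝ :=
  (4 * F₂) • dyad x + (2 * F₁) • innerForm n

theorem norm_radialGrad (F₁ : ℝ) (x : En n) : ‖radialGrad F₁ x‖ = 2 * |F₁| * ‖x‖ := by
  rw [radialGrad, norm_smul, norm_innerForm_apply, Real.norm_eq_abs, abs_mul, abs_two]

theorem contract_radialHess (a : Matrix (Fin n) (Fin n) ℝ) (F₁ F₂ : ℝ) (x : En n) :
    contract a (radialHess F₁ F₂ x) =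
      4 * F₂ * contract a (dyad x) + 2 * F₁ * contract a (innerForm n) := by
  simp only [radialHess, map_add, map_smul, smul_eq_mul]

theorem HasParabolicJet.radial {F F₁ F₂ Ft : ℝ → ℝ → ℝ} (Q : Set (En n × ℝ))
    (hF : Continuous fun z : ℝ × ℝ => F z.1 z.2) (hF₁ : Continuous fun z : ℝ × ℝ => F₁ z.1 z.2)
    (hF₂ : Continuous fun z : ℝ × ℝ => F₂ z.1 z.2)
    (h₁ : ∀ s t, HasDerivAt (fun s => F s t) (F₁ s t) s)
    (h₂ : ∀ s t, HasDerivAt (fun s => F₁ s t) (F₂ s t) s)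
    (ht : ∀ s t, HasDerivAt (fun t => F s t) (Ft s t) t) :
    HasParabolicJet (fun X : En n × ℝ => F (‖X.1‖ ^ 2) X.2)
      (fun X => radialGrad (F₁ (‖X.1‖ ^ 2) X.2) X.1)
      (fun X => radialHess (F₁ (‖X.1‖ ^ 2) X.2) (F₂ (‖X.1‖ ^ 2) X.2) X.1)
      (fun X => Ft (‖X.1‖ ^ 2) X.2) Q where
  cont := (hF.comp (by fun_prop : Continuous fun X : En n × ℝ => (‖X.1‖ ^ 2, X.2))).continuousOn
  grad X _ := by
    refine ((h₁ (‖X.1‖ ^ 2) X.2).comp_hasFDerivAt X.1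
      (hasStrictFDerivAt_norm_sq X.1).hasFDerivAt).congr_fderiv ?_
    ext ξ
    simp only [radialGrad, smul_apply, smul_eq_mul, innerForm_apply, nsmul_eq_mul,
      innerSL_apply_apply, Nat.cast_ofNat]
    ring
  hess X _ := by
    have hcoef := ((h₂ (‖X.1‖ ^ 2) X.2).comp_hasFDerivAt X.1
      (hasStrictFDerivAt_norm_sq X.1).hasFDerivAt).const_mul 2
    refine (hcoef.smul (innerForm n).hasFDerivAt).congr_fderiv ?_
    ext ξ ζ
    simp [radialHess]
    ring
  time X _ := ht (‖X.1‖ ^ 2) X.2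
  hess_cont := by
    have hc : Continuous fun X : En n × ℝ => (‖X.1‖ ^ 2, X.2) := by fun_prop
    exact ((((hF₂.comp hc).const_smul (4 : ℝ)).smul (continuous_dyad.comp continuous_fst)).add
      (((hF₁.comp hc).const_smul (2 : ℝ)).smul continuous_const)).continuousOn
  hess_symm X _ ξ ζ := by
    simp [radialHess, real_inner_comm ξ ζ, mul_comm ⟪X.1, ξ⟫]

/-! ### Lower bounds for a small drift -/

section Bump

/-- The paraboloid-like function whose positivity set is the support of the barrier `bump`. -/
def bumpBase (X : En n × ℝ) : ℝ := 1 / 4 + X.2 / 2 - ‖X.1‖ ^ 2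

/-- The subsolution `e^{-Λt} (1/4 + t/2 - ‖x‖²)³`, positive on the ball of radius `1/2` at time `0`
and on a ball of radius `√3/2` at time `1`; it is used only where `bumpBase` is positive. -/
def bump (Λ : ℝ) (X : En n × ℝ) : ℝ := Real.exp (-Λ * X.2) * bumpBase X ^ 3

/-- The linear coefficient in the quadratic form in `bumpBase` whose sign makes `bump` a
subsolution. -/
def bumpCoeff (n : ℕ) (ν : ℝ) : ℝ := 6 * n * ν + 3 / 2 + 24 * ν⁻¹

/-- The decay rate for which `bump` is a subsolution: with it, `6ν⁻¹ - cq + Λq²` is a perfect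
square. -/
def bumpRate (n : ℕ) (ν : ℝ) : ℝ := ν * bumpCoeff n ν ^ 2 / 24

variable {ν Λ : ℝ} {v : En n × ℝ → ℝ} {m : En n → ℝ} {X : En n × ℝ}

theorem bumpRate_nonneg (n : ℕ) (hν : 0 < ν) : 0 ≤ bumpRate n ν := by
  unfold bumpRate; positivity

theorem hasParabolicJet_bump (Λ : ℝ) (Q : Set (En n × ℝ)) : HasParabolicJet (bump Λ)
    (fun X => radialGrad (Real.exp (-Λ * X.2) * (-3 * bumpBase X ^ 2)) X.1)
    (fun X => radialHess (Real.exp (-Λ * X.2) * (-3 * bumpBase X ^ 2))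
      (Real.exp (-Λ * X.2) * (6 * bumpBase X)) X.1)
    (fun X => Real.exp (-Λ * X.2) * (3 / 2 * bumpBase X ^ 2 - Λ * bumpBase X ^ 3)) Q := by
  refine HasParabolicJet.radial
    (F := fun s t => Real.exp (-Λ * t) * (1 / 4 + t / 2 - s) ^ 3)
    (F₁ := fun s t => Real.exp (-Λ * t) * (-3 * (1 / 4 + t / 2 - s) ^ 2))
    (F₂ := fun s t => Real.exp (-Λ * t) * (6 * (1 / 4 + t / 2 - s)))
    (Ft := fun s t => Real.exp (-Λ * t) *
      (3 / 2 * (1 / 4 + t / 2 - s) ^ 2 - Λ * (1 / 4 + t / 2 - s) ^ 3))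
    Q (by fun_prop) (by fun_prop) (by fun_prop) (fun s t => ?_) (fun s t => ?_) (fun s t => ?_)
  · refine ((((hasDerivAt_id s).const_sub _).pow 3).const_mul _).congr_deriv ?_
    simp
  · refine (((((hasDerivAt_id s).const_sub _).pow 2).const_mul (-3)).const_mul _).congr_deriv ?_
    simp
    ring
  · refine ((((hasDerivAt_id t).const_mul (-Λ)).exp).mul
      (((((hasDerivAt_id t).div_const 2).const_add (1 / 4)).sub_const s).pow 3)).congr_deriv ?_
    simp
    ring

theorem bumpBase_le_one (h : X.2 ≤ 1) : bumpBase X ≤ 1 := by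
  unfold bumpBase
  linarith [sq_nonneg ‖X.1‖]

theorem bumpBase_pos_of_lt_bump (hv : 0 ≤ v X) (h : v X < bump Λ X) : 0 < bumpBase X :=
  (Odd.pow_pos_iff (by decide)).1 (pos_of_mul_pos_right (hv.trans_lt h) (Real.exp_pos _).le)

theorem bump_subsolution_inequality {q A T : ℝ} (hν : 0 < ν) (hq : 0 ≤ q)
    (hA : ν⁻¹ * (1 / 4 - q) ≤ A) (hT : T ≤ n * ν) :
    3 / 2 * q ^ 2 - bumpRate n ν * q ^ 3 ≤ 24 * q * A - 6 * q ^ 2 * T := by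
  have hsq : 6 * ν⁻¹ - bumpCoeff n ν * q + bumpRate n ν * q ^ 2 =
      6 * ν⁻¹ * (1 - ν * bumpCoeff n ν * q / 12) ^ 2 := by
    rw [bumpRate]; field_simp; ring
  have hquad : 0 ≤ 6 * ν⁻¹ - bumpCoeff n ν * q + bumpRate n ν * q ^ 2 := hsq ▸ by positivity
  calc 3 / 2 * q ^ 2 - bumpRate n ν * q ^ 3
      ≤ 3 / 2 * q ^ 2 - bumpRate n ν * q ^ 3 +
        q * (6 * ν⁻¹ - bumpCoeff n ν * q + bumpRate n ν * q ^ 2) :=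
        le_add_of_nonneg_right (mul_nonneg hq hquad)
    _ = 24 * q * (ν⁻¹ * (1 / 4 - q)) - 6 * q ^ 2 * (n * ν) := by rw [bumpCoeff]; ring
    _ ≤ 24 * q * A - 6 * q ^ 2 * T := by gcongr

theorem bump_time_le_contract (hν : 0 < ν) (hq : 0 ≤ bumpBase X) (ht : 0 ≤ X.2)
    {a : Matrix (Fin n) (Fin n) ℝ} (ha : IsElliptic ν a) :
    Real.exp (-Λ * X.2) * (3 / 2 * bumpBase X ^ 2 - bumpRate n ν * bumpBase X ^ 3) ≤
      contract a (radialHess (Real.exp (-Λ * X.2) * (-3 * bumpBase X ^ 2))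
        (Real.exp (-Λ * X.2) * (6 * bumpBase X)) X.1) := by
  have hA : ν⁻¹ * (1 / 4 - bumpBase X) ≤ contract a (dyad X.1) := by
    refine le_trans ?_ (ha.inv_mul_norm_sq_le_contract_dyad X.1)
    gcongr
    unfold bumpBase
    linarith
  have hineq := mul_le_mul_of_nonneg_left
    (bump_subsolution_inequality hν hq hA (ha.contract_innerForm_le hν))
    (Real.exp_pos (-Λ * X.2)).le
  refine hineq.trans_eq ?_
  rw [contract_radialHess]
  ring

theorem norm_bump_grad_le (hΛ : 0 ≤ Λ) (ht : X.2 ∈ Icc (0 : ℝ) 1) (hx : ‖X.1‖ ≤ 1)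
    (hq : 0 ≤ bumpBase X) :
    ‖radialGrad (Real.exp (-Λ * X.2) * (-3 * bumpBase X ^ 2)) X.1‖ ≤ 6 := by
  have hexp : Real.exp (-Λ * X.2) ≤ 1 := Real.exp_le_one_iff.2 (by nlinarith [ht.1])
  have hsq : bumpBase X ^ 2 ≤ 1 := pow_le_one₀ hq (bumpBase_le_one ht.2)
  rw [norm_radialGrad, abs_mul, abs_mul, abs_of_nonneg (Real.exp_pos _).le,
    abs_of_nonneg (sq_nonneg (bumpBase X))]
  calc 2 * (Real.exp (-Λ * X.2) * (|(-3 : ℝ)| * bumpBase X ^ 2)) * ‖X.1‖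
      ≤ 2 * (1 * (|(-3 : ℝ)| * 1)) * 1 := by gcongr
    _ = 6 := by norm_num

theorem isBarrier_bump (hν : 0 < ν) (hv : ∀ X ∈ closedCyl (0 : En n) 1 0 1, 0 ≤ v X)
    (h₀ : ∀ x ∈ closedBall (0 : En n) (1 / 2), 1 ≤ v (x, 0)) :
    IsBarrier ν 6 v (bump (bumpRate n ν))
      (fun X => radialGrad (Real.exp (-bumpRate n ν * X.2) * (-3 * bumpBase X ^ 2)) X.1)
      (fun X => radialHess (Real.exp (-bumpRate n ν * X.2) * (-3 * bumpBase X ^ 2))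
        (Real.exp (-bumpRate n ν * X.2) * (6 * bumpBase X)) X.1)
      (fun X => Real.exp (-bumpRate n ν * X.2) *
        (3 / 2 * bumpBase X ^ 2 - bumpRate n ν * bumpBase X ^ 3)) 0 1 0 1 where
  jet := hasParabolicJet_bump _ _
  mem_ball X hX hlt := by
    have hq := bumpBase_pos_of_lt_bump (hv X hX) hlt
    have ht := hX.2.2
    rw [mem_ball_zero_iff, ← sq_lt_one_iff₀ (norm_nonneg _)]
    unfold bumpBase at hq
    linarith
  lt_time X hX hlt := by
    have hq := bumpBase_pos_of_lt_bump (hv X hX) hlt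
    obtain ⟨x, t⟩ := X
    refine lt_of_le_of_ne hX.2.1 ?_
    rintro rfl
    have hx : ‖x‖ ≤ 1 / 2 := by
      simp only [bumpBase] at hq
      nlinarith [norm_nonneg x]
    have hle : bump (bumpRate n ν) (x, 0) ≤ 1 := by
      simpa [bump] using pow_le_one₀ hq.le (bumpBase_le_one zero_le_one)
    exact absurd (hlt.trans_le hle) (h₀ x (mem_closedBall_zero_iff.2 hx)).not_gt
  subsolution X hX hlt _ ha :=
    bump_time_le_contract hν (bumpBase_pos_of_lt_bump (hv X hX) hlt).le hX.2.1 ha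
  norm_grad_le X hX hlt := norm_bump_grad_le (bumpRate_nonneg n hν) hX.2
    (mem_closedBall_zero_iff.1 hX.1) (bumpBase_pos_of_lt_bump (hv X hX) hlt).le

theorem exp_neg_mul_pow_three_le_bump (hΛ : 0 ≤ Λ) (ht : X.2 ≤ 1)
    (hx : ‖X.1‖ ^ 2 ≤ 1 / 16 + X.2 / 2) : Real.exp (-Λ) * (3 / 16) ^ 3 ≤ bump Λ X := by
  have hq : 3 / 16 ≤ bumpBase X := by unfold bumpBase; linarith
  have hexp : Real.exp (-Λ) ≤ Real.exp (-Λ * X.2) := Real.exp_le_exp.2 (by nlinarith)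
  unfold bump
  gcongr

end Bump

theorem exists_pos_mul_ofReal_lt {V C : ℝ≥0∞} (hV : 0 < V) (hC : C ≠ ⊤) :
    ∃ ε > 0, C * ENNReal.ofReal ε < V := by
  have hlim : Tendsto (fun ε : ℝ => C * ENNReal.ofReal ε) (𝓝[>] 0) (𝓝 (C * ENNReal.ofReal 0)) :=
    (ENNReal.Tendsto.const_mul ENNReal.continuous_ofReal.continuousAt (Or.inr hC)).mono_left
      nhdsWithin_le_nhds
  rw [ofReal_zero, mul_zero] at hlim
  exact (eventually_mem_nhdsWithin.and (hlim.eventually_lt_const hV)).exists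

theorem exists_le_of_small_drift_unit (n : ℕ) {ν : ℝ} (hν : 0 < ν) :
    ∃ ε > 0, ∃ δ ∈ Ioc (0 : ℝ) 1, ∀ (v : En n × ℝ → ℝ) (m : En n → ℝ),
      IsNonnegSupersolution ν m v 0 1 0 1 → (∀ x ∈ closedBall (0 : En n) (1 / 2), 1 ≤ v (x, 0)) →
      ∫⁻ x in ball (0 : En n) 1, ENNReal.ofReal (m x) ^ n ≤ ENNReal.ofReal ε →
      ∀ X ∈ closedCyl (0 : En n) 1 0 1, ‖X.1‖ ^ 2 ≤ 1 / 16 + X.2 / 2 → δ ≤ v X := by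
  set δ : ℝ := Real.exp (-bumpRate n ν) * (3 / 16) ^ 3 / 2 with hδ
  have hδ₀ : 0 < δ := by positivity
  have hδ₁ : δ ≤ 1 := by
    have hexp : Real.exp (-bumpRate n ν) ≤ 1 :=
      Real.exp_le_one_iff.2 (neg_nonpos.2 (bumpRate_nonneg n hν))
    linarith
  obtain ⟨ε, hε, hlt⟩ := exists_pos_mul_ofReal_lt
    (measure_closedBall_pos volume (0 : En n) (div_pos hδ₀ (by norm_num : (0 : ℝ) < 8)))
    (by finiteness : ENNReal.ofReal (2 * ν * (6 + δ / 8)) ^ n ≠ ⊤)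
  refine ⟨ε, hε, δ, ⟨hδ₀, hδ₁⟩, fun v m hv h₀ hm X hX hx => ?_⟩
  by_contra! hlow
  have hφ := isBarrier_bump hν hv.nonneg h₀
  have hgap : v X + δ / 8 * (2 * 1) < bump (bumpRate n ν) X := by
    have hbump := exp_neg_mul_pow_three_le_bump (bumpRate_nonneg n hν) hX.2.2 hx
    linarith
  refine hlt.not_ge ((hφ.volume_closedBall_le hν hv (by norm_num) (by positivity) hX hgap).trans ?_)
  gcongr
  exact (lintegral_mono_set (hφ.contactSet_subset_ball hX hgap)).trans hm

/-! ### Parabolic scaling -/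

section Dilation

variable {E : Type*} [NormedAddCommGroup E] [NormedSpace ℝ E]

theorem setLIntegral_ball_comp_add_smul [FiniteDimensional ℝ E] [MeasurableSpace E] [BorelSpace E]
    (μ : Measure E) [μ.IsAddHaarMeasure] (f : E → ℝ≥0∞) (x₀ : E) {ρ : ℝ} (hρ : 0 < ρ) (R : ℝ) :
    ENNReal.ofReal ρ ^ Module.finrank ℝ E * ∫⁻ x in ball 0 R, f (x₀ + ρ • x) ∂μ =
      ∫⁻ x in ball x₀ (ρ * R), f x ∂μ := by
  have himage : (fun x => x₀ + ρ • x) '' ball 0 R = ball x₀ (ρ * R) := by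
    rw [← image_image (x₀ + ·) (ρ • ·), image_smul, _root_.smul_ball hρ.ne', smul_zero,
      Real.norm_of_nonneg hρ.le, image_add_left, preimage_add_ball, zero_sub, neg_neg]
  have hderiv : ∀ x ∈ ball (0 : E) R, HasFDerivWithinAt (fun x => x₀ + ρ • x)
      (ρ • ContinuousLinearMap.id ℝ E) (ball 0 R) x :=
    fun x _ => (((hasFDerivAt_id x).const_smul ρ).const_add x₀).hasFDerivWithinAt
  have hinj : InjOn (fun x => x₀ + ρ • x) (ball 0 R) :=
    ((add_right_injective x₀).comp (smul_right_injective E hρ.ne')).injOn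
  have hdet : (ρ • ContinuousLinearMap.id ℝ E).det = ρ ^ Module.finrank ℝ E := by
    simp [ContinuousLinearMap.det]
  rw [← himage, lintegral_image_eq_lintegral_abs_det_fderiv_mul μ measurableSet_ball hderiv hinj,
    hdet, abs_of_pos (by positivity), lintegral_const_mul' _ _ ofReal_ne_top, ofReal_pow hρ.le]

/-- The affine map `(x, t) ↦ (x₀ + ρ x, t₀ + ρ² t)`. -/
def parabolicDilation (x₀ : E) (t₀ ρ : ℝ) (X : E × ℝ) : E × ℝ :=
  (x₀ + ρ • X.1, t₀ + ρ ^ 2 * X.2)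

theorem continuous_parabolicDilation (x₀ : E) (t₀ ρ : ℝ) :
    Continuous (parabolicDilation x₀ t₀ ρ) := by
  unfold parabolicDilation
  fun_prop

theorem add_smul_mem_closedBall {x₀ x : E} {ρ R : ℝ} (hρ : 0 ≤ ρ) (hx : x ∈ closedBall 0 R) :
    x₀ + ρ • x ∈ closedBall x₀ (ρ * R) := by
  rw [mem_closedBall_zero_iff] at hx
  rw [mem_closedBall, dist_self_add_left, norm_smul, Real.norm_of_nonneg hρ]
  gcongr

theorem mapsTo_parabolicDilation_closedCyl (x₀ : E) (t₀ : ℝ) {ρ : ℝ} (hρ : 0 ≤ ρ) (R T : ℝ) :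
    MapsTo (parabolicDilation x₀ t₀ ρ) (closedCyl 0 R 0 T)
      (closedCyl x₀ (ρ * R) t₀ (t₀ + ρ ^ 2 * T)) := fun _ hX =>
  ⟨add_smul_mem_closedBall hρ hX.1, le_add_of_nonneg_right (mul_nonneg (sq_nonneg ρ) hX.2.1),
    add_le_add_right (mul_le_mul_of_nonneg_left hX.2.2 (sq_nonneg ρ)) t₀⟩

theorem exists_parabolicDilation_eq {x₀ : E} {t₀ ρ R T : ℝ} (hρ : 0 < ρ) {X : E × ℝ}
    (hX : X ∈ closedCyl x₀ (ρ * R) t₀ (t₀ + ρ ^ 2 * T)) :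
    ∃ Z ∈ closedCyl (0 : E) R 0 T, parabolicDilation x₀ t₀ ρ Z = X := by
  refine ⟨(ρ⁻¹ • (X.1 - x₀), (X.2 - t₀) / ρ ^ 2), ⟨?_, ?_, ?_⟩, ?_⟩
  · rw [mem_closedBall_zero_iff, norm_smul, Real.norm_of_nonneg (by positivity),
      inv_mul_le_iff₀ hρ]
    exact mem_closedBall_iff_norm.1 hX.1
  · exact div_nonneg (sub_nonneg.2 hX.2.1) (sq_nonneg ρ)
  · rw [div_le_iff₀' (by positivity), sub_le_iff_le_add']
    exact hX.2.2
  · simp only [parabolicDilation, smul_inv_smul₀ hρ.ne',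
      mul_div_cancel₀ (X.2 - t₀) (pow_ne_zero 2 hρ.ne'), add_sub_cancel]

variable {w : E × ℝ → ℝ} {g : E × ℝ → E →L[ℝ] ℝ} {H : E × ℝ → E →L[ℝ] E →L[ℝ] ℝ}
  {wt : E × ℝ → ℝ} {Q Q' : Set (E × ℝ)}

theorem HasParabolicJet.const_smul (h : HasParabolicJet w g H wt Q) (c : ℝ) :
    HasParabolicJet (c • w) (c • g) (c • H) (c • wt) Q where
  cont := h.cont.const_smul c
  grad X hX := (h.grad X hX).const_smul c
  hess X hX := (h.hess X hX).const_smul c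
  time X hX := (h.time X hX).const_smul c
  hess_cont := h.hess_cont.const_smul c
  hess_symm X hX ξ ζ := by simp [h.hess_symm X hX ξ ζ]

theorem HasParabolicJet.comp_parabolicDilation (h : HasParabolicJet w g H wt Q') {x₀ : E}
    {t₀ ρ : ℝ} (hQ : MapsTo (parabolicDilation x₀ t₀ ρ) Q Q') :
    HasParabolicJet (w ∘ parabolicDilation x₀ t₀ ρ) (ρ • (g ∘ parabolicDilation x₀ t₀ ρ))
      (ρ ^ 2 • (H ∘ parabolicDilation x₀ t₀ ρ)) (ρ ^ 2 • (wt ∘ parabolicDilation x₀ t₀ ρ)) Q := by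
  have hspace : ∀ x : E, HasFDerivAt (fun x => x₀ + ρ • x) (ρ • ContinuousLinearMap.id ℝ E) x :=
    fun x => ((hasFDerivAt_id x).const_smul ρ).const_add x₀
  have htime : ∀ t : ℝ, HasDerivAt (fun t => t₀ + ρ ^ 2 * t) (ρ ^ 2) t := fun t => by
    simpa using ((hasDerivAt_id t).const_mul (ρ ^ 2)).const_add t₀
  have hc := (continuous_parabolicDilation x₀ t₀ ρ).continuousOn (s := Q)
  refine ⟨h.cont.comp hc hQ, fun X hX => ?_, fun X hX => ?_, fun X hX => ?_,
    (h.hess_cont.comp hc hQ).const_smul _, fun X hX ξ ζ => ?_⟩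
  · refine ((h.grad _ (hQ hX)).comp X.1 (hspace X.1)).congr_fderiv ?_
    ext ξ
    simp
  · refine (((h.hess _ (hQ hX)).comp X.1 (hspace X.1)).const_smul ρ).congr_fderiv ?_
    ext ξ ζ
    simp
    ring
  · refine ((h.time _ (hQ hX)).comp X.2 (htime X.2)).congr_deriv ?_
    simp [mul_comm]
  · simp [h.hess_symm _ (hQ hX) ξ ζ]

end Dilation

section Rescale

variable {ν : ℝ} {m : En n → ℝ} {v : En n × ℝ → ℝ} {x₀ x₁ : En n} {R R' t₀ t₁ s₀ s₁ : ℝ}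

theorem closedCyl_subset_closedCyl (hR : R' + dist x₁ x₀ ≤ R) (h₀ : t₀ ≤ s₀) (h₁ : s₁ ≤ t₁) :
    closedCyl x₁ R' s₀ s₁ ⊆ closedCyl x₀ R t₀ t₁ :=
  prod_mono (closedBall_subset_closedBall' hR) (Icc_subset_Icc h₀ h₁)

theorem IsNonnegSupersolution.mono (h : IsNonnegSupersolution ν m v x₀ R t₀ t₁)
    (hR : R' + dist x₁ x₀ ≤ R) (h₀ : t₀ ≤ s₀) (h₁ : s₁ ≤ t₁) :
    IsNonnegSupersolution ν m v x₁ R' s₀ s₁ := by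
  obtain ⟨g, H, vt, hjet, hsup⟩ := h.exists_jet
  have hb := closedBall_subset_closedBall' hR
  have hQ := closedCyl_subset_closedCyl hR h₀ h₁
  exact ⟨fun X hX => h.nonneg X (hQ hX), h.drift_cont.mono hb, fun x hx => h.drift_nonneg x (hb hx),
    g, H, vt, hjet.mono hQ, fun X hX => hsup X (hQ hX)⟩

theorem IsNonnegSupersolution.rescale {ρ T A : ℝ} (hρ : 0 < ρ) (hA : 0 < A)
    (h : IsNonnegSupersolution ν m v x₀ (ρ * R) t₀ (t₀ + ρ ^ 2 * T)) :
    IsNonnegSupersolution ν (fun x => ρ * m (x₀ + ρ • x))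
      (A⁻¹ • (v ∘ parabolicDilation x₀ t₀ ρ)) 0 R 0 T := by
  obtain ⟨g, H, vt, hjet, hsup⟩ := h.exists_jet
  have hQ := mapsTo_parabolicDilation_closedCyl x₀ t₀ hρ.le R T
  have hball : MapsTo (fun x => x₀ + ρ • x) (closedBall 0 R) (closedBall x₀ (ρ * R)) :=
    fun x hx => add_smul_mem_closedBall hρ.le hx
  refine ⟨fun X hX => mul_nonneg (inv_nonneg.2 hA.le) (h.nonneg _ (hQ hX)),
    (h.drift_cont.comp (by fun_prop) hball).const_smul ρ,
    fun x hx => mul_nonneg hρ.le (h.drift_nonneg _ (hball hx)), _, _, _,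
    (hjet.comp_parabolicDilation hQ).const_smul A⁻¹, fun X hX => ?_⟩
  obtain ⟨a, ha, hle⟩ := hsup _ (hQ hX)
  refine ⟨a, ha, ?_⟩
  have hscaled := mul_le_mul_of_nonneg_left hle (by positivity : 0 ≤ A⁻¹ * ρ ^ 2)
  simp only [Pi.smul_apply, Function.comp_apply, map_smul, norm_smul, smul_eq_mul,
    Real.norm_of_nonneg hρ.le, Real.norm_of_nonneg (inv_nonneg.2 hA.le)]
  refine le_trans (le_of_eq ?_) (hscaled.trans_eq (mul_assoc _ _ _))
  simp only [parabolicDilation]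
  ring

theorem lintegral_rescaled_drift (m : En n → ℝ) (x₀ : En n) {ρ : ℝ} (hρ : 0 < ρ) (R : ℝ) :
    ∫⁻ x in ball (0 : En n) R, ENNReal.ofReal (ρ * m (x₀ + ρ • x)) ^ n =
      ∫⁻ x in ball x₀ (ρ * R), ENNReal.ofReal (m x) ^ n := by
  have hcov := setLIntegral_ball_comp_add_smul volume (fun x => ENNReal.ofReal (m x) ^ n) x₀ hρ R
  rw [finrank_euclideanSpace_fin] at hcov
  simp_rw [← hcov, ofReal_mul hρ.le, mul_pow]
  exact lintegral_const_mul' _ _ (by finiteness)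

end Rescale

section SmallDrift

variable (n) {ν : ℝ}

theorem exists_le_of_small_drift (hν : 0 < ν) :
    ∃ ε > 0, ∃ δ ∈ Ioc (0 : ℝ) 1, ∀ (v : En n × ℝ → ℝ) (m : En n → ℝ) (x₀ : En n) (ρ t₀ A : ℝ),
      0 < ρ → 0 < A → IsNonnegSupersolution ν m v x₀ ρ t₀ (t₀ + ρ ^ 2) →
      (∀ x ∈ closedBall x₀ (ρ / 2), A ≤ v (x, t₀)) →
      ∫⁻ x in ball x₀ ρ, ENNReal.ofReal (m x) ^ n ≤ ENNReal.ofReal ε →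
      ∀ X ∈ closedCyl x₀ ρ t₀ (t₀ + ρ ^ 2), ‖X.1 - x₀‖ ^ 2 ≤ ρ ^ 2 / 16 + (X.2 - t₀) / 2 →
        δ * A ≤ v X := by
  obtain ⟨ε, hε, δ, hδ, hunit⟩ := exists_le_of_small_drift_unit n hν
  refine ⟨ε, hε, δ, hδ, fun v m x₀ ρ t₀ A hρ hA hv h₀ hm X hX hXx => ?_⟩
  obtain ⟨Z, hZ, rfl⟩ := exists_parabolicDilation_eq (R := 1) (T := 1) hρ (by simpa using hX)
  have hZx : ‖Z.1‖ ^ 2 ≤ 1 / 16 + Z.2 / 2 := by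
    simp only [parabolicDilation, add_sub_cancel_left, norm_smul, Real.norm_of_nonneg hρ.le] at hXx
    refine le_of_mul_le_mul_left ?_ (pow_pos hρ 2)
    linarith
  have hv' : IsNonnegSupersolution ν m v x₀ (ρ * 1) t₀ (t₀ + ρ ^ 2 * 1) := by
    simpa only [mul_one] using hv
  have h₀' : ∀ x ∈ closedBall (0 : En n) (1 / 2),
      1 ≤ (A⁻¹ • (v ∘ parabolicDilation x₀ t₀ ρ)) (x, 0) := fun x hx => by
    have hx' := h₀ _ (by simpa only [mul_one_div] using add_smul_mem_closedBall hρ.le hx)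
    simpa [parabolicDilation, le_inv_mul_iff₀ hA] using hx'
  have hm' : ∫⁻ x in ball (0 : En n) 1, ENNReal.ofReal (ρ * m (x₀ + ρ • x)) ^ n ≤
      ENNReal.ofReal ε := by rwa [lintegral_rescaled_drift m x₀ hρ, mul_one]
  have hle := hunit _ _ (hv'.rescale hρ hA) h₀' hm' Z hZ hZx
  rwa [Pi.smul_apply, smul_eq_mul, le_inv_mul_iff₀ hA, mul_comm] at hle

theorem exists_pow_mul_le_of_small_drift (hν : 0 < ν) :
    ∃ ε > 0, ∃ δ > 0, ∀ (k : ℕ) (v : En n × ℝ → ℝ) (m : En n → ℝ) (x₀ : En n) (ρ t₀ A : ℝ),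
      0 < ρ → 0 < A → IsNonnegSupersolution ν m v x₀ ρ t₀ (t₀ + k * ρ ^ 2) →
      (∀ x ∈ closedBall x₀ (ρ / 2), A ≤ v (x, t₀)) →
      ∫⁻ x in ball x₀ ρ, ENNReal.ofReal (m x) ^ n ≤ ENNReal.ofReal ε →
      ∀ X ∈ closedCyl x₀ (ρ / 4) t₀ (t₀ + k * ρ ^ 2), δ ^ k * A ≤ v X := by
  obtain ⟨ε, hε, δ, hδ, hstep⟩ := exists_le_of_small_drift n hν
  refine ⟨ε, hε, δ, hδ.1, fun k v m x₀ ρ t₀ A hρ hA hv h₀ hm => ?_⟩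
  suffices (∀ X ∈ closedCyl x₀ (ρ / 4) t₀ (t₀ + k * ρ ^ 2), δ ^ k * A ≤ v X) ∧
      ∀ x ∈ closedBall x₀ (ρ / 2), δ ^ k * A ≤ v (x, t₀ + k * ρ ^ 2) from this.1
  induction k with
  | zero =>
    simp only [Nat.cast_zero, zero_mul, add_zero, pow_zero, one_mul]
    refine ⟨fun ⟨x, t⟩ hX => ?_, h₀⟩
    obtain rfl : t = t₀ := le_antisymm hX.2.2 hX.2.1
    exact h₀ x (closedBall_subset_closedBall (by linarith) hX.1)
  | succ k ih =>
    have htime : t₀ + (k + 1 : ℕ) * ρ ^ 2 = t₀ + k * ρ ^ 2 + ρ ^ 2 := by push_cast; ring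
    have hk : 0 ≤ k * ρ ^ 2 := by positivity
    have hρ2 : 0 ≤ ρ ^ 2 := sq_nonneg ρ
    rw [htime] at hv ⊢
    obtain ⟨hcyl, htop⟩ := ih (hv.mono (by simp) le_rfl (by linarith))
    have hnext := hstep v m x₀ ρ (t₀ + k * ρ ^ 2) (δ ^ k * A) hρ (mul_pos (pow_pos hδ.1 k) hA)
      (hv.mono (by simp) (by linarith) le_rfl) htop hm
    rw [pow_succ' δ, mul_assoc]
    refine ⟨fun X hX => ?_, fun x hx => ?_⟩
    · rcases le_total X.2 (t₀ + k * ρ ^ 2) with ht | ht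
      · exact (mul_le_of_le_one_left (mul_pos (pow_pos hδ.1 k) hA).le hδ.2).trans
          (hcyl X ⟨hX.1, hX.2.1, ht⟩)
      · have hx := mem_closedBall_iff_norm.1 hX.1
        refine hnext X ⟨closedBall_subset_closedBall (by linarith) hX.1, ht, hX.2.2⟩ ?_
        nlinarith [norm_nonneg (X.1 - x₀)]
    · refine hnext _ ⟨closedBall_subset_closedBall (by linarith) hx, by linarith, le_rfl⟩ ?_
      have hx := mem_closedBall_iff_norm.1 hx
      simp only
      nlinarith [norm_nonneg (x - x₀)]

end SmallDrift

/-! ### Spreading of positivity from a core -/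

section Contact

variable {E : Type*} [NormedAddCommGroup E] [InnerProductSpace ℝ E] {w w' : E × ℝ → ℝ}
  {Q : Set (E × ℝ)} {σ σ' : ℝ}

theorem IsContact.of_sub_le_sub {x p p' : E} {t t' : ℝ} (h : IsContact w Q σ (x, t) p)
    (h' : IsContact w' Q σ' (x, t') p') (hle : w (x, t) - w' (x, t) ≤ w (x, t') - w' (x, t')) :
    IsContact w Q σ (x, t') p := by
  refine ⟨h.1, h'.2.1, fun Z hZ => ?_⟩
  have hZ' := h.2.2 hZ
  have hmax := h'.2.2 h.2.1
  simp only [mem_ofPred_eq] at hZ' hmax ⊢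
  linarith

end Contact

theorem IsContact.norm_grad_sub_le {w w' : En n × ℝ → ℝ} {g g' : En n × ℝ → En n →L[ℝ] ℝ}
    {H H' : En n × ℝ → En n →L[ℝ] En n →L[ℝ] ℝ} {wt wt' : En n × ℝ → ℝ} {x₀ : En n}
    {R t₀ t₁ σ σ' : ℝ} {X : En n × ℝ} {p p' : En n}
    (hc : IsContact w (closedCyl x₀ R t₀ t₁) σ X p)
    (hw : HasParabolicJet w g H wt (closedCyl x₀ R t₀ t₁))
    (hc' : IsContact w' (closedCyl x₀ R t₀ t₁) σ' X p')
    (hw' : HasParabolicJet w' g' H' wt' (closedCyl x₀ R t₀ t₁)) (hX : X.1 ∈ ball x₀ R) :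
    ‖g X - g' X‖ ≤ σ + σ' := by
  have hg : g X - g' X = innerForm n (p - p') := by
    ext ξ
    simp [hc.grad_apply hw hX ξ, hc'.grad_apply hw' hX ξ]
  rw [hg, norm_innerForm_apply]
  exact (norm_sub_le _ _).trans (add_le_add hc.1 hc'.1)

theorem IsBarrier.volume_closedBall_le_of_mul {ν L σ h : ℝ} {m : En n → ℝ} {v φ : En n × ℝ → ℝ}
    {gφ : En n × ℝ → En n →L[ℝ] ℝ} {Hφ : En n × ℝ → En n →L[ℝ] En n →L[ℝ] ℝ}
    {φt : En n × ℝ → ℝ} {x₀ : En n} {R t₀ t₁ : ℝ} {X₁ : En n × ℝ}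
    (hφ : IsBarrier ν (h * L) v φ gφ Hφ φt x₀ R t₀ t₁) (hν : 0 < ν)
    (hv : IsNonnegSupersolution ν m v x₀ R t₀ t₁) (hh : 0 < h) (hL : 0 ≤ L) (hσ : 0 ≤ σ)
    (hX₁ : X₁ ∈ closedCyl x₀ R t₀ t₁) (hlt : v X₁ + h * σ * (2 * R) < φ X₁) :
    volume (closedBall (0 : En n) σ) ≤ ENNReal.ofReal (2 * ν * (L + σ)) ^ n *
      ∫⁻ x in contactSet (φ - v) (closedCyl x₀ R t₀ t₁) (h * σ), ENNReal.ofReal (m x) ^ n := by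
  have hest := hφ.volume_closedBall_le hν hv (by positivity) (by positivity) hX₁ hlt
  rw [Measure.addHaar_closedBall_mul_of_pos _ _ hh, finrank_euclideanSpace_fin, ofReal_pow hh.le,
    show 2 * ν * (h * L + h * σ) = h * (2 * ν * (L + σ)) by ring, ofReal_mul hh.le, mul_pow,
    mul_assoc] at hest
  have hh_pow : ENNReal.ofReal h ^ n ≠ 0 := pow_ne_zero n (ofReal_pos.2 hh).ne'
  exact (ENNReal.mul_le_mul_iff_right hh_pow (by finiteness)).1 hest

section Gauss

/-- The barrier `h (e^{-α‖x‖²} - e^{-16α}) - e^{-λt}`: nonpositive for `‖x‖ ≥ 4` and, when `h ≤ 1`,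
initially. For large `α` and small `λ` it is a subsolution away from the origin. -/
def gaussBarrier (α lam h : ℝ) (X : En n × ℝ) : ℝ :=
  h * (Real.exp (-(α * ‖X.1‖ ^ 2)) - Real.exp (-(16 * α))) - Real.exp (-(lam * X.2))

variable {ν α lam h ϱ T : ℝ} {v : En n × ℝ → ℝ} {m : En n → ℝ} {X : En n × ℝ}

theorem hasParabolicJet_gaussBarrier (α lam h : ℝ) (Q : Set (En n × ℝ)) :
    HasParabolicJet (gaussBarrier α lam h)
      (fun X => radialGrad (-(h * α * Real.exp (-(α * ‖X.1‖ ^ 2)))) X.1)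
      (fun X => radialHess (-(h * α * Real.exp (-(α * ‖X.1‖ ^ 2))))
        (h * α ^ 2 * Real.exp (-(α * ‖X.1‖ ^ 2))) X.1)
      (fun X => lam * Real.exp (-(lam * X.2))) Q := by
  have hexp : ∀ c s : ℝ, HasDerivAt (fun s => Real.exp (-(c * s))) (-(c * Real.exp (-(c * s)))) s :=
    fun c s => (((hasDerivAt_id s).const_mul c).neg.exp).congr_deriv (by simp; ring)
  refine HasParabolicJet.radial
    (F := fun s t => h * (Real.exp (-(α * s)) - Real.exp (-(16 * α))) - Real.exp (-(lam * t)))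
    (F₁ := fun s _ => -(h * α * Real.exp (-(α * s))))
    (F₂ := fun s _ => h * α ^ 2 * Real.exp (-(α * s)))
    (Ft := fun _ t => lam * Real.exp (-(lam * t)))
    Q (by fun_prop) (by fun_prop) (by fun_prop) (fun s _ => ?_) (fun s _ => ?_) (fun _ t => ?_)
  · exact ((((hexp α s).sub_const _).const_mul h).sub_const _).congr_deriv (by ring)
  · exact ((hexp α s).const_mul (h * α)).neg.congr_deriv (by ring)
  · exact ((hexp lam t).const_sub _).congr_deriv (neg_neg _)

theorem norm_lt_of_gaussBarrier_pos (hα : 0 ≤ α) (hh : 0 < h) (hX : 0 < gaussBarrier α lam h X) :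
    ‖X.1‖ < 4 := by
  by_contra! hx
  have hexp : Real.exp (-(α * ‖X.1‖ ^ 2)) ≤ Real.exp (-(16 * α)) :=
    Real.exp_le_exp.2 (by
      nlinarith [mul_le_mul_of_nonneg_left (pow_le_pow_left₀ (by norm_num) hx 2) hα])
  have hprod := mul_nonpos_of_nonneg_of_nonpos hh.le (sub_nonpos.2 hexp)
  rw [gaussBarrier] at hX
  linarith [Real.exp_pos (-(lam * X.2))]

theorem gaussBarrier_add_exp_lt (hα : 0 ≤ α) (hh : 0 < h) :
    gaussBarrier α lam h X + Real.exp (-(lam * X.2)) < h := by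
  have hexp : Real.exp (-(α * ‖X.1‖ ^ 2)) ≤ 1 :=
    Real.exp_le_one_iff.2 (neg_nonpos.2 (by positivity))
  rw [gaussBarrier, sub_add_cancel]
  exact mul_lt_of_lt_one_right hh (by linarith [Real.exp_pos (-(16 * α))])

theorem mul_sub_exp_le_gaussBarrier (hα : 0 ≤ α) (hh : 0 ≤ h) (hX : ‖X.1‖ ≤ 3) :
    h * (Real.exp (-(9 * α)) - Real.exp (-(16 * α))) - Real.exp (-(lam * X.2)) ≤
      gaussBarrier α lam h X := by
  have hexp : Real.exp (-(9 * α)) ≤ Real.exp (-(α * ‖X.1‖ ^ 2)) :=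
    Real.exp_le_exp.2 (by
      nlinarith [mul_le_mul_of_nonneg_left (pow_le_pow_left₀ (norm_nonneg _) hX 2) hα])
  unfold gaussBarrier
  gcongr

theorem exp_neg_sixteen_mul_le {x : En n} (hα : 0 ≤ α) (hx : ‖x‖ ≤ 4) :
    Real.exp (-(16 * α)) ≤ Real.exp (-(α * ‖x‖ ^ 2)) :=
  Real.exp_le_exp.2 (by
    nlinarith [mul_le_mul_of_nonneg_left (pow_le_pow_left₀ (norm_nonneg _) hx 2) hα])

theorem gauss_time_le_contract (hν : 0 < ν) (hα : 0 ≤ α) (hαϱ : (n + 1) * ν ^ 2 ≤ α * ϱ ^ 2)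
    (hlamα : lam ≤ 2 * α * ((n + 1) * ν) * Real.exp (-(16 * α))) (hϱ : 0 ≤ ϱ)
    (hh : 0 ≤ h) (hϱX : ϱ ≤ ‖X.1‖) (hX : ‖X.1‖ ≤ 4) (ht : Real.exp (-(lam * X.2)) ≤ h)
    {a : Matrix (Fin n) (Fin n) ℝ} (ha : IsElliptic ν a) :
    lam * Real.exp (-(lam * X.2)) ≤
      contract a (radialHess (-(h * α * Real.exp (-(α * ‖X.1‖ ^ 2))))
        (h * α ^ 2 * Real.exp (-(α * ‖X.1‖ ^ 2))) X.1) := by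
  have hexp := exp_neg_sixteen_mul_le hα hX
  have htr : contract a (innerForm n) ≤ (n + 1) * ν :=
    (ha.contract_innerForm_le hν).trans (by linarith)
  have hquad : (n + 1) * ν ≤ α * contract a (dyad X.1) := by
    have hdyad : ν⁻¹ * ϱ ^ 2 ≤ contract a (dyad X.1) :=
      le_trans (by gcongr) (ha.inv_mul_norm_sq_le_contract_dyad X.1)
    calc (n + 1) * ν = ν⁻¹ * ((n + 1) * ν ^ 2) := by field_simp
      _ ≤ ν⁻¹ * (α * ϱ ^ 2) := by gcongr
      _ = α * (ν⁻¹ * ϱ ^ 2) := by ring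
      _ ≤ α * contract a (dyad X.1) := by gcongr
  calc lam * Real.exp (-(lam * X.2))
      ≤ 2 * α * ((n + 1) * ν) * Real.exp (-(16 * α)) * h := by gcongr
    _ ≤ 2 * α * ((n + 1) * ν) * Real.exp (-(α * ‖X.1‖ ^ 2)) * h := by gcongr
    _ = h * α * Real.exp (-(α * ‖X.1‖ ^ 2)) * (2 * ((n + 1) * ν)) := by ring
    _ ≤ h * α * Real.exp (-(α * ‖X.1‖ ^ 2)) *
        (4 * (α * contract a (dyad X.1)) - 2 * contract a (innerForm n)) := by
        gcongr
        linarith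
    _ = _ := by rw [contract_radialHess]; ring

theorem norm_gauss_grad_le (hα : 0 ≤ α) (hh : 0 ≤ h) (hX : ‖X.1‖ ≤ 4) :
    ‖radialGrad (-(h * α * Real.exp (-(α * ‖X.1‖ ^ 2)))) X.1‖ ≤ h * (8 * α) := by
  have hexp : Real.exp (-(α * ‖X.1‖ ^ 2)) ≤ 1 :=
    Real.exp_le_one_iff.2 (neg_nonpos.2 (by positivity))
  rw [norm_radialGrad, abs_neg, abs_of_nonneg (by positivity)]
  calc 2 * (h * α * Real.exp (-(α * ‖X.1‖ ^ 2))) * ‖X.1‖ ≤ 2 * (h * α * 1) * 4 := by gcongr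
    _ = h * (8 * α) := by ring

theorem lt_norm_of_lt_gaussBarrier (hα : 0 ≤ α) (hh : h ∈ Ioc 0 1)
    (hcore : ∀ X ∈ closedCyl (0 : En n) ϱ 0 T, 1 ≤ v X) (ht : X.2 ∈ Icc 0 T)
    (hlt : v X < gaussBarrier α lam h X) : ϱ < ‖X.1‖ := by
  by_contra! hx
  have hone := hcore X ⟨mem_closedBall_zero_iff.2 hx, ht⟩
  linarith [gaussBarrier_add_exp_lt (lam := lam) (X := X) hα hh.1, Real.exp_pos (-(lam * X.2)),
    hh.2]

theorem isBarrier_gaussBarrier (hν : 0 < ν) (hα : 0 ≤ α) (hαϱ : (n + 1) * ν ^ 2 ≤ α * ϱ ^ 2)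
    (hlamα : lam ≤ 2 * α * ((n + 1) * ν) * Real.exp (-(16 * α))) (hϱ : 0 ≤ ϱ)
    (hh : h ∈ Ioc 0 1) (hv : ∀ X ∈ closedCyl (0 : En n) 4 0 T, 0 ≤ v X)
    (hcore : ∀ X ∈ closedCyl (0 : En n) ϱ 0 T, 1 ≤ v X) :
    IsBarrier ν (h * (8 * α)) v (gaussBarrier α lam h)
      (fun X => radialGrad (-(h * α * Real.exp (-(α * ‖X.1‖ ^ 2)))) X.1)
      (fun X => radialHess (-(h * α * Real.exp (-(α * ‖X.1‖ ^ 2))))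
        (h * α ^ 2 * Real.exp (-(α * ‖X.1‖ ^ 2))) X.1)
      (fun X => lam * Real.exp (-(lam * X.2))) 0 4 0 T := by
  have htime : ∀ X ∈ closedCyl (0 : En n) 4 0 T, v X < gaussBarrier α lam h X →
      Real.exp (-(lam * X.2)) < h := fun X hX hlt => by
    linarith [hv X hX, gaussBarrier_add_exp_lt (lam := lam) (X := X) hα hh.1]
  refine ⟨hasParabolicJet_gaussBarrier _ _ _ _, fun X hX hlt => mem_ball_zero_iff.2
    (norm_lt_of_gaussBarrier_pos hα hh.1 ((hv X hX).trans_lt hlt)), fun X hX hlt => ?_,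
    fun X hX hlt a ha => ?_, fun X hX _ =>
      norm_gauss_grad_le hα hh.1.le (mem_closedBall_zero_iff.1 hX.1)⟩
  · refine lt_of_le_of_ne hX.2.1 fun h₀ => ?_
    have hexp := htime X hX hlt
    rw [← h₀, mul_zero, neg_zero, Real.exp_zero] at hexp
    exact hexp.not_ge hh.2
  · exact gauss_time_le_contract hν hα hαϱ hlamα hϱ hh.1.le
      (lt_norm_of_lt_gaussBarrier hα hh hcore hX.2 hlt).le (mem_closedBall_zero_iff.1 hX.1)
      (htime X hX hlt).le ha

/-- At a common base point the time dependence of the two barriers is the same, so the contact times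
may be taken equal; then the gradients of the barriers differ by more than the contact slopes. -/
theorem disjoint_contactSet_gaussBarrier {g : En n × ℝ → En n →L[ℝ] ℝ}
    {H : En n × ℝ → En n →L[ℝ] En n →L[ℝ] ℝ} {vt : En n × ℝ → ℝ} {h' σ : ℝ} (hα : 0 < α)
    (hv : HasParabolicJet v g H vt (closedCyl 0 4 0 T)) (hσ : 0 ≤ σ)
    (hσα : σ ≤ α * Real.exp (-(16 * α)) * ϱ / 2) (hh : 0 < h) (hh' : h' ≤ h / 2)
    (hsub : contactSet (gaussBarrier α lam h - v) (closedCyl 0 4 0 T) (h * σ) ⊆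
      ball 0 4 \ closedBall 0 ϱ) :
    Disjoint (contactSet (gaussBarrier α lam h - v) (closedCyl 0 4 0 T) (h * σ))
      (contactSet (gaussBarrier α lam h' - v) (closedCyl 0 4 0 T) (h' * σ)) := by
  rw [Set.disjoint_left]
  rintro x hx ⟨⟨_, p'⟩, ⟨t', hc'⟩, rfl⟩
  obtain ⟨hball, hcore⟩ := hsub hx
  obtain ⟨⟨x, p⟩, ⟨t, hc⟩, hxeq⟩ := hx
  dsimp only at hxeq hc hc' hball hcore
  subst hxeq
  have hx4 : ‖x‖ ≤ 4 := (mem_ball_zero_iff.1 hball).le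
  have hϱx : ϱ < ‖x‖ := by simpa using hcore
  have hc₂ := hc.of_sub_le_sub hc' (by simp [gaussBarrier])
  have hgrad := hc₂.norm_grad_sub_le ((hasParabolicJet_gaussBarrier α lam h _).sub hv) hc'
    ((hasParabolicJet_gaussBarrier α lam h' _).sub hv) hball
  set e : ℝ := Real.exp (-(α * ‖x‖ ^ 2)) with he
  have hexp : Real.exp (-(16 * α)) ≤ e := exp_neg_sixteen_mul_le hα.le hx4
  have hdiff : ‖radialGrad (-((h - h') * α * e)) x‖ ≤ h * σ + h' * σ := by
    convert hgrad using 2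
    simp only [Pi.sub_apply, radialGrad, ← he]
    module
  have hhh : 0 ≤ h - h' := by linarith
  rw [norm_radialGrad, abs_neg, abs_of_nonneg (by positivity)] at hdiff
  have hlower : h * (α * Real.exp (-(16 * α)) * ϱ) < 2 * ((h - h') * α * e) * ‖x‖ := by
    calc h * (α * Real.exp (-(16 * α)) * ϱ) < h * (α * Real.exp (-(16 * α)) * ‖x‖) := by gcongr
      _ = 2 * (h / 2 * α * Real.exp (-(16 * α))) * ‖x‖ := by ring
      _ ≤ 2 * ((h - h') * α * e) * ‖x‖ := by gcongr; linarith
  have hupper : h * σ + h' * σ ≤ h * (α * Real.exp (-(16 * α)) * ϱ) := by nlinarith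
  linarith

theorem contactSet_gaussBarrier_subset {σ : ℝ} (hν : 0 < ν) (hα : 0 ≤ α)
    (hαϱ : (n + 1) * ν ^ 2 ≤ α * ϱ ^ 2)
    (hlamα : lam ≤ 2 * α * ((n + 1) * ν) * Real.exp (-(16 * α))) (hϱ : 0 ≤ ϱ)
    (hv₀ : ∀ Z ∈ closedCyl (0 : En n) 4 0 T, 0 ≤ v Z)
    (hcore : ∀ Z ∈ closedCyl (0 : En n) ϱ 0 T, 1 ≤ v Z) (hh : h ∈ Ioc (0 : ℝ) 1)
    (hX : X ∈ closedCyl 0 4 0 T) (hgap : v X + h * σ * (2 * 4) < gaussBarrier α lam h X) :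
    contactSet (gaussBarrier α lam h - v) (closedCyl 0 4 0 T) (h * σ) ⊆
      ball 0 4 \ closedBall 0 ϱ :=
  image_subset_iff.2 fun q ⟨t, hc⟩ => by
    have hlt := hc.lt_of_add_lt hX hgap
    refine ⟨(isBarrier_gaussBarrier hν hα hαϱ hlamα hϱ hh hv₀ hcore).mem_ball
      (q.1, t) hc.2.1 hlt, fun hq => ?_⟩
    exact (lt_norm_of_lt_gaussBarrier hα hh hcore hc.2.1.2 hlt).not_ge
      (mem_closedBall_zero_iff.1 hq)

/-- The barriers at the dyadic heights `2⁻ⁱ`, `i < I`, have disjoint contact sets, each of which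
carries at least a fixed amount of the drift. -/
theorem natCast_mul_volume_closedBall_le {σ : ℝ} (hν : 0 < ν) (hα : 0 < α)
    (hαϱ : (n + 1) * ν ^ 2 ≤ α * ϱ ^ 2)
    (hlamα : lam ≤ 2 * α * ((n + 1) * ν) * Real.exp (-(16 * α))) (hϱ : 0 ≤ ϱ)
    (hv : IsNonnegSupersolution ν m v 0 4 0 T)
    (hcore : ∀ X ∈ closedCyl (0 : En n) ϱ 0 T, 1 ≤ v X) (hσ : 0 ≤ σ)
    (hσα : σ ≤ α * Real.exp (-(16 * α)) * ϱ / 2) {I : ℕ} (hX : X ∈ closedCyl 0 4 0 T)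
    (hgap : ∀ i < I, v X + (1 / 2) ^ i * σ * (2 * 4) < gaussBarrier α lam ((1 / 2) ^ i) X) :
    I * volume (closedBall (0 : En n) σ) ≤ ENNReal.ofReal (2 * ν * (8 * α + σ)) ^ n *
      ∫⁻ x in ball (0 : En n) 4, ENNReal.ofReal (m x) ^ n := by
  obtain ⟨g, H, vt, hjet, -⟩ := hv.exists_jet
  have hh : ∀ i : ℕ, (1 / 2 : ℝ) ^ i ∈ Ioc (0 : ℝ) 1 := fun i =>
    ⟨by positivity, pow_le_one₀ (by norm_num) (by norm_num)⟩
  have hφ := fun i => isBarrier_gaussBarrier hν hα.le hαϱ hlamα hϱ (hh i) hv.nonneg hcore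
  set C : ℕ → Set (En n) := fun i =>
    contactSet (gaussBarrier α lam ((1 / 2) ^ i) - v) (closedCyl 0 4 0 T) ((1 / 2) ^ i * σ)
  have hsub : ∀ i < I, C i ⊆ ball 0 4 \ closedBall 0 ϱ := fun i hi =>
    contactSet_gaussBarrier_subset hν hα.le hαϱ hlamα hϱ hv.nonneg hcore (hh i) hX (hgap i hi)
  have hdisj : ∀ i j, i < j → i < I → Disjoint (C i) (C j) := fun i j hij hi => by
    refine disjoint_contactSet_gaussBarrier hα hjet hσ hσα (hh i).1 ?_ (hsub i hi)
    calc (1 / 2 : ℝ) ^ j ≤ (1 / 2) ^ (i + 1) :=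
          pow_le_pow_of_le_one (by norm_num) (by norm_num) hij
      _ = (1 / 2) ^ i / 2 := by ring
  rw [← lintegral_const_mul' _ _ (by finiteness)]
  have hsum := card_mul_le_setLIntegral_of_disjoint (μ := volume)
    (c := volume (closedBall (0 : En n) σ)) (t := Finset.range I) (s := ball (0 : En n) 4) (A := C)
    (f := fun x => ENNReal.ofReal (2 * ν * (8 * α + σ)) ^ n * ENNReal.ofReal (m x) ^ n)
    (fun i _ => (isCompact_contactSet (isCompact_closedCyl _ _ _ _)
      ((hφ i).jet.sub hjet).cont).measurableSet)
    (fun i hi => (hsub i (Finset.mem_range.1 hi)).trans sdiff_subset)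
    (fun i hi j hj hij => ?_) (fun i hi => ?_)
  · rwa [Finset.card_range] at hsum
  · rw [Finset.coe_range, mem_Iio] at hi hj
    rcases lt_or_gt_of_ne hij with h | h
    · exact hdisj i j h hi
    · exact (hdisj j i h hj).symm
  · rw [lintegral_const_mul' _ _ (by finiteness)]
    exact (hφ i).volume_closedBall_le_of_mul hν hv (hh i).1 (by positivity) hσ hX
      (hgap i (Finset.mem_range.1 hi))

end Gauss

theorem exists_le_of_core_unit (n : ℕ) {ν ϱ : ℝ} (hν : 0 < ν) (hϱ : 0 < ϱ) {S : ℝ≥0∞}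
    (hS : S ≠ ⊤) :
    ∃ T > 0, ∃ η > 0, ∀ (v : En n × ℝ → ℝ) (m : En n → ℝ), IsNonnegSupersolution ν m v 0 4 0 T →
      (∀ X ∈ closedCyl (0 : En n) ϱ 0 T, 1 ≤ v X) →
      ∫⁻ x in ball (0 : En n) 4, ENNReal.ofReal (m x) ^ n ≤ S →
      ∀ x ∈ closedBall (0 : En n) 3, η ≤ v (x, T) := by
  set α : ℝ := (n + 1) * ν ^ 2 / ϱ ^ 2 with hα_def
  have hα : 0 < α := by positivity
  have hαϱ : (n + 1) * ν ^ 2 ≤ α * ϱ ^ 2 := by rw [hα_def]; field_simp; rfl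
  set lam : ℝ := 2 * α * ((n + 1) * ν) * Real.exp (-(16 * α))
  have hlam : 0 < lam := by positivity
  set d : ℝ := Real.exp (-(9 * α)) - Real.exp (-(16 * α)) with hd_def
  have hd : 0 < d := sub_pos.2 (Real.exp_lt_exp.2 (by linarith))
  have hd₁ : d < 1 := by
    linarith [Real.exp_le_one_iff.2 (by linarith : -(9 * α) ≤ 0), Real.exp_pos (-(16 * α))]
  set σ : ℝ := min (d / 16) (α * Real.exp (-(16 * α)) * ϱ / 2)
  have hσ : 0 < σ := by positivity
  obtain ⟨I, hI⟩ := ENNReal.exists_nat_mul_gt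
    (measure_closedBall_pos volume (0 : En n) hσ).ne'
    (by finiteness : ENNReal.ofReal (2 * ν * (8 * α + σ)) ^ n * S ≠ ⊤)
  set η : ℝ := d * (1 / 2) ^ I / 4 with hη_def
  have hη : 0 < η := by positivity
  have hη₁ : η < 1 := by
    have hpow : (1 / 2 : ℝ) ^ I ≤ 1 := pow_le_one₀ (by norm_num) (by norm_num)
    nlinarith
  set T : ℝ := Real.log η⁻¹ / lam with hT_def
  have hT : 0 < T := div_pos (Real.log_pos ((one_lt_inv₀ hη).2 hη₁)) hlam
  have hexpT : Real.exp (-(lam * T)) = η := by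
    rw [hT_def, mul_div_cancel₀ _ hlam.ne', Real.exp_neg, Real.exp_log (inv_pos.2 hη), inv_inv]
  refine ⟨T, hT, η, hη, fun v m hv hcore hm x hx => ?_⟩
  by_contra! hlow
  have hx3 : ‖x‖ ≤ 3 := mem_closedBall_zero_iff.1 hx
  have hX : (x, T) ∈ closedCyl (0 : En n) 4 0 T :=
    ⟨mem_closedBall_zero_iff.2 (by linarith), hT.le, le_rfl⟩
  refine hI.not_ge ((natCast_mul_volume_closedBall_le hν hα hαϱ le_rfl hϱ.le hv hcore hσ.le
    (min_le_right _ _) hX fun i hi => ?_).trans (by gcongr))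
  have hbar := mul_sub_exp_le_gaussBarrier (lam := lam) (X := (x, T)) hα.le
    (by positivity : 0 ≤ (1 / 2 : ℝ) ^ i) hx3
  rw [hexpT, ← hd_def] at hbar
  have hpow : (1 / 2 : ℝ) ^ I ≤ (1 / 2) ^ i :=
    pow_le_pow_of_le_one (by norm_num) (by norm_num) hi.le
  have hσd : (1 / 2 : ℝ) ^ i * σ ≤ (1 / 2) ^ i * (d / 16) := by gcongr; exact min_le_left _ _
  have hηi : 4 * η ≤ (1 / 2) ^ i * d := by rw [hη_def]; nlinarith
  linarith

theorem exists_le_of_core (n : ℕ) {ν ϱ : ℝ} (hν : 0 < ν) (hϱ : 0 < ϱ) {S : ℝ≥0∞} (hS : S ≠ ⊤) :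
    ∃ T > 0, ∃ η > 0, ∀ (v : En n × ℝ → ℝ) (m : En n → ℝ) (x₀ : En n) (ρ t₀ A : ℝ),
      0 < ρ → 0 < A → IsNonnegSupersolution ν m v x₀ (ρ * 4) t₀ (t₀ + ρ ^ 2 * T) →
      (∀ X ∈ closedCyl x₀ (ρ * ϱ) t₀ (t₀ + ρ ^ 2 * T), A ≤ v X) →
      ∫⁻ x in ball x₀ (ρ * 4), ENNReal.ofReal (m x) ^ n ≤ S →
      ∀ x ∈ closedBall x₀ (ρ * 3), η * A ≤ v (x, t₀ + ρ ^ 2 * T) := by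
  obtain ⟨T, hT, η, hη, hunit⟩ := exists_le_of_core_unit n hν hϱ hS
  refine ⟨T, hT, η, hη, fun v m x₀ ρ t₀ A hρ hA hv hcore hm x hx => ?_⟩
  have hcore' : ∀ Z ∈ closedCyl (0 : En n) ϱ 0 T,
      1 ≤ (A⁻¹ • (v ∘ parabolicDilation x₀ t₀ ρ)) Z := fun Z hZ => by
    have hle := hcore _ (mapsTo_parabolicDilation_closedCyl x₀ t₀ hρ.le ϱ T hZ)
    rwa [Pi.smul_apply, smul_eq_mul, le_inv_mul_iff₀ hA, mul_one]
  obtain ⟨⟨z, t⟩, hz, hzx⟩ : ∃ Z ∈ closedCyl (0 : En n) 3 0 T,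
      parabolicDilation x₀ t₀ ρ Z = (x, t₀ + ρ ^ 2 * T) :=
    exists_parabolicDilation_eq hρ ⟨hx, le_add_of_nonneg_right (by positivity), le_rfl⟩
  obtain rfl : t = T := by
    have ht : t₀ + ρ ^ 2 * t = t₀ + ρ ^ 2 * T := congrArg Prod.snd hzx
    exact mul_left_cancel₀ (pow_ne_zero 2 hρ.ne') (add_left_cancel ht)
  have hle := hunit _ _ (hv.rescale hρ hA) hcore'
    ((lintegral_rescaled_drift m x₀ hρ 4).trans_le hm) z hz.1
  rwa [Pi.smul_apply, Function.comp_apply, hzx, smul_eq_mul, le_inv_mul_iff₀ hA, mul_comm] at hle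

/-! ### Growth of the lower bound from a ball to a larger ball -/

theorem exists_ball_lintegral_le {E : Type*} [NormedAddCommGroup E] [NormedSpace ℝ E]
    [Nontrivial E] [MeasurableSpace E] [OpensMeasurableSpace E] (μ : Measure E) {f : E → ℝ≥0∞}
    {S ε : ℝ≥0∞} {J : ℕ} (hJ : S < J * ε) {x₀ : E} {R : ℝ} (hR : 0 < R)
    (hf : ∫⁻ x in ball x₀ R, f x ∂μ ≤ S) :
    ∃ z ∈ closedBall x₀ (R / 2), ∫⁻ x in ball z (R / (5 * J)), f x ∂μ ≤ ε := by
  have hJ0 : J ≠ 0 := by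
    rintro rfl
    simp at hJ
  have hJ1 : (1 : ℝ) ≤ J := by exact_mod_cast Nat.one_le_iff_ne_zero.2 hJ0
  obtain ⟨e, he⟩ := exists_norm_eq E zero_le_one
  let z : ℕ → E := fun j => x₀ + (R * j / (2 * J)) • e
  have hdist : ∀ i j, dist (z i) (z j) = R / (2 * J) * |(i : ℝ) - j| := fun i j => by
    calc dist (z i) (z j) = |R * i / (2 * J) - R * j / (2 * J)| := by
          rw [dist_add_left, dist_eq_norm, ← sub_smul, norm_smul, he, mul_one, Real.norm_eq_abs]
      _ = |R / (2 * J) * (i - j)| := by ring_nf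
      _ = R / (2 * J) * |(i : ℝ) - j| := by rw [abs_mul, abs_of_nonneg (by positivity)]
  have hz : ∀ j ∈ Finset.range J, dist (z j) x₀ ≤ R / 2 := fun j hj => by
    have hjJ : (j : ℝ) ≤ J := by exact_mod_cast (Finset.mem_range.1 hj).le
    calc dist (z j) x₀ = R / (2 * J) * j := by
          rw [dist_self_add_left, norm_smul, he, mul_one, Real.norm_of_nonneg (by positivity),
            mul_div_right_comm]
      _ ≤ R / (2 * J) * J := by gcongr
      _ = R / 2 := by field_simp
  have hdisj : ((Finset.range J : Finset ℕ) : Set ℕ).PairwiseDisjoint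
      fun j => ball (z j) (R / (5 * J)) := fun i _ j _ hij => by
    refine ball_disjoint_ball ?_
    have hij' : (1 : ℝ) ≤ |(i : ℝ) - j| := by
      exact_mod_cast Int.one_le_abs (sub_ne_zero.2 (Nat.cast_injective.ne hij))
    calc R / (5 * J) + R / (5 * J) = R / (2 * J) * (4 / 5) := by field_simp; norm_num
      _ ≤ dist (z i) (z j) := by rw [hdist]; gcongr; linarith
  by_contra! hlarge
  have hsub : ∀ j ∈ Finset.range J, ball (z j) (R / (5 * J)) ⊆ ball x₀ R := fun j hj => by
    refine ball_subset_ball' ?_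
    have hsmall : R / (5 * J) ≤ R / 2 := by gcongr; linarith
    linarith [hz j hj]
  have hcard := card_mul_le_setLIntegral_of_disjoint (c := ε) (fun _ _ => measurableSet_ball)
    hsub hdisj fun j hj => (hlarge (z j) (hz j hj)).le
  rw [Finset.card_range] at hcard
  exact (hcard.trans hf).not_gt hJ

theorem IsNonnegSupersolution.exists_growth_step [NeZero n] {ν : ℝ} (hν : 0 < ν) {S : ℝ≥0∞}
    (hS : S ≠ ⊤) :
    ∃ T > 0, ∃ δ > 0, ∀ (v : En n × ℝ → ℝ) (m : En n → ℝ) (x₀ : En n) (ρ t₀ A : ℝ),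
      0 < ρ → 0 < A → IsNonnegSupersolution ν m v x₀ (ρ * 5) t₀ (t₀ + ρ ^ 2 * T) →
      (∀ x ∈ closedBall x₀ ρ, A ≤ v (x, t₀)) →
      ∫⁻ x in ball x₀ (ρ * 5), ENNReal.ofReal (m x) ^ n ≤ S →
      ∀ x ∈ closedBall x₀ (ρ * 2), δ * A ≤ v (x, t₀ + ρ ^ 2 * T) := by
  obtain ⟨ε, hε, δ, hδ, hdrift⟩ := exists_pow_mul_le_of_small_drift n hν
  obtain ⟨J, hJ⟩ := ENNReal.exists_nat_mul_gt (ENNReal.ofReal_pos.2 hε).ne' hS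
  have hJ1 : (1 : ℝ) ≤ J := by
    exact_mod_cast Nat.one_le_iff_ne_zero.2 (by rintro rfl; simp at hJ)
  set d : ℝ := 1 / (5 * J) with hd
  have : 0 < d := by positivity
  have hd1 : d ≤ 1 / 5 := by rw [hd]; gcongr; linarith
  obtain ⟨T, hT, η, hη, hcore⟩ := exists_le_of_core n hν (by positivity : 0 < d / 4) hS
  obtain ⟨k, hk⟩ := exists_nat_gt (T / d ^ 2)
  rw [div_lt_iff₀ (by positivity)] at hk
  refine ⟨k * d ^ 2, hT.trans hk, η * δ ^ k, by positivity,
    fun v m x₀ ρ t₀ A hρ hA hv hv₀ hm x hx => ?_⟩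
  have hm₁ := (lintegral_mono_set (ball_subset_ball (by linarith : ρ ≤ ρ * 5))).trans hm
  obtain ⟨z, hz, hmz⟩ := exists_ball_lintegral_le volume hJ hρ hm₁
  rw [mem_closedBall] at hz
  have hradius : ρ / (5 * J) = ρ * d := by rw [hd, mul_one_div]
  have htime : t₀ + ρ ^ 2 * (k * d ^ 2) = t₀ + k * (ρ * d) ^ 2 := by ring
  have hρd : ρ * d ≤ ρ * (1 / 5) := by gcongr
  have hρT : ρ ^ 2 * T ≤ ρ ^ 2 * (k * d ^ 2) := by gcongr
  have hlow := hdrift k v m z (ρ * d) t₀ A (by positivity) hA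
    (hv.mono (by linarith) le_rfl htime.ge)
    (fun x hx => hv₀ x (closedBall_subset_closedBall' (by linarith) hx)) (hradius ▸ hmz)
  set s := t₀ + ρ ^ 2 * (k * d ^ 2) - ρ ^ 2 * T
  have hsT : s + ρ ^ 2 * T = t₀ + ρ ^ 2 * (k * d ^ 2) := sub_add_cancel _ _
  have hfinal := hcore v m z ρ s (δ ^ k * A) hρ (by positivity)
    (hv.mono (by linarith) (by linarith) hsT.le)
    (fun X hX => hlow X (closedCyl_subset_closedCyl (by simp [mul_div_assoc]) (by linarith)
      (by linarith) hX))
    ((lintegral_mono_set (ball_subset_ball' (by linarith))).trans hm) x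
    (closedBall_subset_closedBall' (by rw [dist_comm]; linarith) hx)
  rwa [hsT, ← mul_assoc] at hfinal

/-! ### From subsolutions to nonnegative supersolutions -/

section SpatialDerivatives

variable {F : Type*} [NormedAddCommGroup F] [NormedSpace ℝ F]

theorem sum_proj_smulRight_single (L : En n →L[ℝ] F) :
    ∑ i, (EuclideanSpace.proj i : En n →L[ℝ] ℝ).smulRight (L (EuclideanSpace.single i 1)) = L := by
  ext ξ
  conv_rhs => rw [← (EuclideanSpace.basisFun (Fin n) ℝ).sum_repr ξ]
  simp [sum_apply]

theorem continuousOn_of_apply_single {α : Type*} [TopologicalSpace α] {f : α → En n →L[ℝ] F}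
    {s : Set α} (h : ∀ i, ContinuousOn (fun X => f X (EuclideanSpace.single i 1)) s) :
    ContinuousOn f s := by
  rw [← funext fun X => sum_proj_smulRight_single (f X)]
  exact continuousOn_finsetSum _ fun i _ =>
    (ContinuousLinearMap.smulRightL ℝ (En n) F (EuclideanSpace.proj i)).continuous.comp_continuousOn
      (h i)

theorem differentiableAt_of_apply_single {E : Type*} [NormedAddCommGroup E] [NormedSpace ℝ E]
    {f : E → En n →L[ℝ] F} {x : E}
    (h : ∀ i, DifferentiableAt ℝ (fun z => f z (EuclideanSpace.single i 1)) x) :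
    DifferentiableAt ℝ f x := by
  rw [← funext fun z => sum_proj_smulRight_single (f z)]
  exact DifferentiableAt.fun_sum fun i _ =>
    (ContinuousLinearMap.smulRightL ℝ (En n) F (EuclideanSpace.proj i)).differentiableAt.comp x
      (h i)

/-- The spatial gradient of `u`, as a linear form. -/
def spatialGrad (u : En n × ℝ → ℝ) (X : En n × ℝ) : En n →L[ℝ] ℝ :=
  fderiv ℝ (fun x => u (x, X.2)) X.1

/-- The spatial Hessian of `u`, as a bilinear form. -/
def spatialHess (u : En n × ℝ → ℝ) (X : En n × ℝ) : En n →L[ℝ] En n →L[ℝ] ℝ :=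
  fderiv ℝ (fun x => spatialGrad u (x, X.2)) X.1

end SpatialDerivatives

namespace IsC21

variable {u : En n × ℝ → ℝ} {V V' : Set (En n × ℝ)}

theorem mono (hu : IsC21 u V) (hV : V' ⊆ V) : IsC21 u V' where
  cont := hu.cont.mono hV
  diff_t X hX := hu.diff_t X (hV hX)
  diff_x X hX := hu.diff_x X (hV hX)
  diff_xx j X hX := hu.diff_xx j X (hV hX)
  cont_t := hu.cont_t.mono hV
  cont_x i := (hu.cont_x i).mono hV
  cont_xx i j := (hu.cont_xx i j).mono hV

theorem continuousOn_spatialGrad (hu : IsC21 u V) : ContinuousOn (spatialGrad u) V :=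
  continuousOn_of_apply_single hu.cont_x

theorem hasFDerivAt_spatialGrad (hu : IsC21 u V) {X : En n × ℝ} (hX : X ∈ V) :
    HasFDerivAt (fun x => spatialGrad u (x, X.2)) (spatialHess u X) X.1 :=
  (differentiableAt_of_apply_single fun j => hu.diff_xx j X hX).hasFDerivAt

theorem spatialHess_single (hu : IsC21 u V) {X : En n × ℝ} (hX : X ∈ V) (i j : Fin n) :
    spatialHess u X (EuclideanSpace.single i 1) (EuclideanSpace.single j 1) = Dxx u i j X := by
  have happly := (hu.hasFDerivAt_spatialGrad hX).clm_apply
    (hasFDerivAt_const (EuclideanSpace.single j (1 : ℝ)) X.1)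
  have hDxx : Dxx u i j X = _ := DFunLike.congr_fun happly.fderiv (EuclideanSpace.single i 1)
  simpa using hDxx.symm

theorem continuousOn_spatialHess (hu : IsC21 u V) : ContinuousOn (spatialHess u) V :=
  continuousOn_of_apply_single fun i => continuousOn_of_apply_single fun j =>
    (hu.cont_xx i j).congr fun _ hX => hu.spatialHess_single hX i j

theorem hasParabolicJet (hu : IsC21 u V) (hV : IsOpen V) :
    HasParabolicJet u (spatialGrad u) (spatialHess u) (Dt u) V where
  cont := hu.cont
  grad X hX := (hu.diff_x X hX).hasFDerivAt
  hess X hX := hu.hasFDerivAt_spatialGrad hX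
  time X hX := (hu.diff_t X hX).hasDerivAt
  hess_cont := hu.continuousOn_spatialHess
  hess_symm X hX := by
    have hnear : ∀ᶠ x in 𝓝 X.1, (x, X.2) ∈ V :=
      (Continuous.prodMk_left X.2).continuousAt.preimage_mem_nhds (hV.mem_nhds hX)
    exact second_derivative_symmetric_of_eventually (f := fun x => u (x, X.2))
      (hnear.mono fun x hx => (hu.diff_x _ hx).hasFDerivAt) (hu.hasFDerivAt_spatialGrad hX)

theorem Lop_eq (hu : IsC21 u V) {X : En n × ℝ} (hX : X ∈ V)
    (a : En n × ℝ → Matrix (Fin n) (Fin n) ℝ) (b : En n × ℝ → En n) :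
    Lop a b u X = contract (a X) (spatialHess u X) + spatialGrad u X (b X) := by
  have hgrad : spatialGrad u X (b X) = ∑ i, b X i * Dx u i X := by
    conv_lhs => rw [← sum_proj_smulRight_single (spatialGrad u X)]
    simp [sum_apply, spatialGrad, Dx]
  simp only [Lop, hgrad, contract_apply, hu.spatialHess_single hX]

end IsC21

theorem HasParabolicJet.affine_time {E : Type*} [NormedAddCommGroup E] [NormedSpace ℝ E]
    (M κ t₀ : ℝ) (Q : Set (E × ℝ)) :
    HasParabolicJet (fun X => M + κ * (X.2 - t₀)) 0 0 (fun _ => κ) Q where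
  cont := by fun_prop
  grad X _ := hasFDerivAt_const (M + κ * (X.2 - t₀)) X.1
  hess X _ := hasFDerivAt_const (0 : E →L[ℝ] ℝ) X.1
  time X _ := by simpa using (((hasDerivAt_id X.2).sub_const t₀).const_mul κ).const_add M
  hess_cont := continuousOn_const
  hess_symm _ _ _ _ := rfl

theorem continuousOn_sSup_image_Icc {E : Type*} [TopologicalSpace E] {G : E × ℝ → ℝ} {B : Set E}
    {t₀ t₁ : ℝ} (hG : ContinuousOn G (B ×ˢ Icc t₀ t₁)) :
    ContinuousOn (fun x => sSup ((fun t => G (x, t)) '' Icc t₀ t₁)) B := by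
  rw [continuousOn_iff_continuous_domRestrict]
  have hsup : Continuous fun x : B =>
      sSup ((fun t : Icc t₀ t₁ => G ((x : E), (t : ℝ))) '' univ) :=
    isCompact_univ.continuous_sSup (f := fun (x : B) (t : Icc t₀ t₁) => G ((x : E), (t : ℝ)))
      (hG.comp_continuous (f := fun q : B × Icc t₀ t₁ => ((q.1 : E), (q.2 : ℝ))) (by fun_prop)
        fun q => ⟨q.1.2, q.2.2⟩)
  refine hsup.congr fun x => congrArg sSup ?_
  ext c
  simp

theorem exists_pos_forall_div_add_mul_le {α : Type*} [TopologicalSpace α] [T2Space α]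
    {f p : α → ℝ} {Q : Set α} (hQ : IsCompact Q) (hf : ContinuousOn f Q) (hp : ContinuousOn p Q)
    (hp₀ : ∀ X ∈ Q, 0 ≤ p X) (hfp : ∀ X ∈ Q, p X = 0 → f X ≤ 0) {κ : ℝ} (hκ : 0 < κ) :
    ∃ η > 0, ∀ X ∈ Q, f X / (p X + η) * η ≤ κ := by
  obtain ⟨C, hC⟩ := hQ.bddAbove_image hf
  have hlarge : IsCompact (Q ∩ f ⁻¹' Ici κ) := hQ.of_isClosed_subset
    (hf.preimage_isClosed_of_isClosed hQ.isClosed isClosed_Ici) inter_subset_left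
  obtain ⟨c, hc, hcp⟩ := hlarge.exists_forall_le' (hp.mono inter_subset_left) (a := 0)
    fun X hX => (hp₀ X hX.1).lt_of_ne' fun h => ((hfp X hX.1 h).trans_lt hκ).not_ge hX.2
  refine ⟨κ * c / max C 1, by positivity, fun X hX => ?_⟩
  set η := κ * c / max C 1 with hη
  have hη₀ : 0 < η := by positivity
  have hpX := hp₀ X hX
  rw [div_mul_eq_mul_div, div_le_iff₀ (by positivity)]
  rcases lt_or_ge (f X) κ with hsmall | hbig
  · calc f X * η ≤ κ * η := by gcongr
      _ ≤ κ * (p X + η) := by gcongr; linarith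
  · calc f X * η ≤ max C 1 * η := by gcongr; exact (hC ⟨X, hX, rfl⟩).trans (le_max_left _ _)
      _ = κ * c := by rw [hη]; field_simp
      _ ≤ κ * (p X + η) := by gcongr; linarith [hcp X ⟨hX, hbig⟩]

theorem le_essSup_restrict_of_continuousOn {α : Type*} [TopologicalSpace α] [MeasurableSpace α]
    [OpensMeasurableSpace α] (μ : Measure α) [μ.IsOpenPosMeasure] {W : Set α} (hW : IsOpen W)
    {f g : α → ℝ≥0∞} (hg : ContinuousOn g W) (hgf : ∀ t ∈ W, g t ≤ f t) {t : α} (ht : t ∈ W) :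
    g t ≤ essSup f (μ.restrict W) := by
  by_contra! hlt
  have hopen : IsOpen (W ∩ g ⁻¹' Ioi (essSup f (μ.restrict W))) :=
    hg.isOpen_inter_preimage hW isOpen_Ioi
  have hle := ENNReal.ae_le_essSup (μ := μ.restrict W) f
  rw [ae_restrict_iff' hW.measurableSet] at hle
  refine (hopen.measure_pos μ ⟨t, ht, hlt⟩).ne' (measure_mono_null ?_ (ae_iff.1 hle))
  exact fun τ hτ hτle => (hτ.2.trans_le ((hgf τ hτ.1).trans (hτle hτ.1))).false

theorem lintegral_sSup_image_Icc_pow_le {G : En n × ℝ → ℝ} {b : En n × ℝ → En n}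
    {V : Set (En n × ℝ)} (hV : IsOpen V) (hG : ContinuousOn G V) (hGb : ∀ X ∈ V, G X ≤ ‖b X‖)
    {B : Set (En n)} (hB : MeasurableSet B) {t₀ t₁ : ℝ} (ht₀₁ : t₀ ≤ t₁)
    (hBV : B ×ˢ Icc t₀ t₁ ⊆ V) :
    ∫⁻ x in B, ENNReal.ofReal (sSup ((fun t => G (x, t)) '' Icc t₀ t₁)) ^ n ≤
      LxnLtinfPow b V := by
  refine (setLIntegral_mono' hB fun x hx => ?_).trans (setLIntegral_le_lintegral B _)
  have hslice : Continuous fun t : ℝ => (x, t) := Continuous.prodMk_right x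
  obtain ⟨t, ht, hsup⟩ := isCompact_Icc.exists_sSup_image_eq (nonempty_Icc.2 ht₀₁)
    (hG.comp hslice.continuousOn fun t ht => hBV ⟨hx, ht⟩)
  simp only [Function.comp_def] at hsup
  gcongr
  rw [hsup]
  refine le_essSup_restrict_of_continuousOn volume (hV.preimage hslice)
    (g := fun t => ENNReal.ofReal (G (x, t)))
    (ENNReal.continuous_ofReal.comp_continuousOn (hG.comp hslice.continuousOn fun t ht => ht))
    (fun t ht => ?_) (hBV ⟨hx, ht⟩)
  rw [← enorm_eq_nnnorm, ← ofReal_norm]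
  exact ENNReal.ofReal_le_ofReal (hGb _ ht)

/-- `u` is a classical solution of `-u_t + Lu ≥ 0` in the open set `V`, for some operator `L` with
ellipticity constant `ν` whose drift has mass at most `S`. -/
structure IsDriftSubsolution (ν : ℝ) (S : ℝ≥0∞) (u : En n × ℝ → ℝ) (V : Set (En n × ℝ)) :
    Prop where
  isOpen : IsOpen V
  isC21 : IsC21 u V
  exists_coeff : ∃ a b, UnifParabolic ν a V ∧ LxnLtinfPow b V ≤ S ∧
    ∀ X ∈ V, 0 ≤ -Dt u X + Lop a b u X

/-- The positive part of `u_t - sup_a Σ a_ij D_ij u`: the part of `u_t` that only a drift term can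
account for. -/
def driftDefect (ν : ℝ) (u : En n × ℝ → ℝ) (X : En n × ℝ) : ℝ :=
  max (Dt u X - pucciSup ν (spatialHess u X)) 0

section DriftDefect

variable {ν : ℝ} {S : ℝ≥0∞} {u : En n × ℝ → ℝ} {V : Set (En n × ℝ)}

theorem IsC21.continuousOn_driftDefect (hu : IsC21 u V) (hν : 0 < ν) :
    ContinuousOn (driftDefect ν u) V :=
  (hu.cont_t.sub ((continuous_pucciSup hν).comp_continuousOn hu.continuousOn_spatialHess)).sup
    continuousOn_const

theorem IsC21.driftDefect_le (hu : IsC21 u V) (hν : 0 < ν)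
    {a : En n × ℝ → Matrix (Fin n) (Fin n) ℝ} {b : En n × ℝ → En n} (ha : UnifParabolic ν a V)
    {X : En n × ℝ} (hX : X ∈ V) (hpde : 0 ≤ -Dt u X + Lop a b u X) :
    driftDefect ν u X ≤ ‖b X‖ * ‖spatialGrad u X‖ := by
  refine max_le ?_ (by positivity)
  have hsecond := contract_le_pucciSup hν (ha X hX) (spatialHess u X)
  have hfirst := (le_abs_self _).trans ((spatialGrad u X).le_opNorm (b X))
  rw [hu.Lop_eq hX] at hpde
  linarith

/-- The smallest drift accounting for `driftDefect`, regularized by `η` so as to be continuous at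
the critical points of `u`. -/
def driftQuotient (ν η : ℝ) (u : En n × ℝ → ℝ) (X : En n × ℝ) : ℝ :=
  driftDefect ν u X / (‖spatialGrad u X‖ + η)

theorem driftQuotient_nonneg {η : ℝ} (hη : 0 ≤ η) (X : En n × ℝ) : 0 ≤ driftQuotient ν η u X :=
  div_nonneg (le_max_right _ _) (by positivity)

theorem IsC21.continuousOn_driftQuotient (hu : IsC21 u V) (hν : 0 < ν) {η : ℝ} (hη : 0 < η) :
    ContinuousOn (driftQuotient ν η u) V :=
  (hu.continuousOn_driftDefect hν).div (hu.continuousOn_spatialGrad.norm.add continuousOn_const)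
    fun _ _ => by positivity

/-- The supremum over `[t₀, t₁]` of `driftQuotient`. -/
def driftEnvelope (ν η : ℝ) (u : En n × ℝ → ℝ) (t₀ t₁ : ℝ) (x : En n) : ℝ :=
  sSup ((fun t => driftQuotient ν η u (x, t)) '' Icc t₀ t₁)

variable {M κ η t₀ t₁ R : ℝ} {x₀ : En n}

theorem IsC21.driftQuotient_le_driftEnvelope (hu : IsC21 u V) (hν : 0 < ν) (hη : 0 < η)
    (hQ : closedCyl x₀ R t₀ t₁ ⊆ V) {X : En n × ℝ} (hX : X ∈ closedCyl x₀ R t₀ t₁) :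
    driftQuotient ν η u X ≤ driftEnvelope ν η u t₀ t₁ X.1 :=
  le_csSup (isCompact_Icc.bddAbove_image ((hu.continuousOn_driftQuotient hν hη).comp
    (Continuous.prodMk_right X.1).continuousOn fun _ ht => hQ ⟨hX.1, ht⟩)) ⟨X.2, hX.2, rfl⟩

theorem IsC21.isNonnegSupersolution (hu : IsC21 u V) (hV : IsOpen V) (hν : 0 < ν) (hη : 0 < η)
    (hne : {a : Matrix (Fin n) (Fin n) ℝ | IsElliptic ν a}.Nonempty)
    (hM : ∀ X ∈ V, u X ≤ M) (hκ : 0 ≤ κ) (ht : t₀ ≤ t₁) (hQ : closedCyl x₀ R t₀ t₁ ⊆ V)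
    (hηκ : ∀ X ∈ closedCyl x₀ R t₀ t₁, driftQuotient ν η u X * η ≤ κ) :
    IsNonnegSupersolution ν (driftEnvelope ν η u t₀ t₁) ((fun X => M + κ * (X.2 - t₀)) - u)
      x₀ R t₀ t₁ := by
  refine ⟨fun X hX => ?_, continuousOn_sSup_image_Icc
    ((hu.continuousOn_driftQuotient hν hη).mono hQ), fun x hx => ?_, _, _, _,
    (HasParabolicJet.affine_time M κ t₀ _).sub ((hu.hasParabolicJet hV).mono hQ), fun X hX => ?_⟩
  · have hgain : 0 ≤ κ * (X.2 - t₀) := mul_nonneg hκ (sub_nonneg.2 hX.2.1)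
    simp only [Pi.sub_apply]
    linarith [hM X (hQ hX)]
  · exact (driftQuotient_nonneg hη.le (x, t₀)).trans
      (hu.driftQuotient_le_driftEnvelope hν hη hQ (X := (x, t₀)) ⟨hx, left_mem_Icc.2 ht⟩)
  · obtain ⟨a, ha, hpucci⟩ := exists_pucciSup_eq_contract hν hne (spatialHess u X)
    refine ⟨a, ha, ?_⟩
    have hdefect : Dt u X - pucciSup ν (spatialHess u X) ≤
        driftQuotient ν η u X * (‖spatialGrad u X‖ + η) := by
      rw [driftQuotient, div_mul_cancel₀ _ (by positivity)]
      exact le_max_left _ _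
    have henv := mul_le_mul_of_nonneg_right
      (hu.driftQuotient_le_driftEnvelope hν hη hQ hX) (norm_nonneg (spatialGrad u X))
    simp only [Pi.sub_apply, Pi.zero_apply, zero_sub, map_neg, norm_neg, ← hpucci]
    linarith [hηκ X hX]

theorem IsDriftSubsolution.exists_isNonnegSupersolution (hu : IsDriftSubsolution ν S u V)
    (hν : 0 < ν) (hM : ∀ X ∈ V, u X ≤ M) (hκ : 0 < κ) (hR : 0 ≤ R) (ht : t₀ ≤ t₁)
    (hQ : closedCyl x₀ R t₀ t₁ ⊆ V) :
    ∃ m, IsNonnegSupersolution ν m ((fun X => M + κ * (X.2 - t₀)) - u) x₀ R t₀ t₁ ∧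
      ∫⁻ x in ball x₀ R, ENNReal.ofReal (m x) ^ n ≤ S := by
  obtain ⟨a, b, ha, hb, hpde⟩ := hu.exists_coeff
  have hdefect := fun X (hX : X ∈ V) => hu.isC21.driftDefect_le hν ha hX (hpde X hX)
  obtain ⟨η, hη, hηκ⟩ := exists_pos_forall_div_add_mul_le (isCompact_closedCyl x₀ R t₀ t₁)
    ((hu.isC21.continuousOn_driftDefect hν).mono hQ)
    (hu.isC21.continuousOn_spatialGrad.norm.mono hQ)
    (fun X _ => norm_nonneg _)
    (fun X hX h => (hdefect X (hQ hX)).trans_eq (by rw [h, mul_zero])) hκ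
  have hquot : ∀ X ∈ V, driftQuotient ν η u X ≤ ‖b X‖ := fun X hX => by
    rw [driftQuotient, div_le_iff₀ (by positivity)]
    exact (hdefect X hX).trans (by gcongr; linarith)
  have hX₀ : (x₀, t₀) ∈ V := hQ ⟨mem_closedBall_self hR, left_mem_Icc.2 ht⟩
  refine ⟨_, hu.isC21.isNonnegSupersolution hu.isOpen hν hη ⟨_, ha _ hX₀⟩ hM hκ.le ht hQ hηκ, ?_⟩
  refine (lintegral_sSup_image_Icc_pow_le hu.isOpen (hu.isC21.continuousOn_driftQuotient hν hη)
    hquot measurableSet_ball ht ?_).trans hb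
  exact (prod_mono_left ball_subset_closedBall).trans hQ

end DriftDefect

theorem IsDriftSubsolution.exists_growth_step [NeZero n] {ν : ℝ} (hν : 0 < ν) {S : ℝ≥0∞}
    (hS : S ≠ ⊤) :
    ∃ T > 0, ∃ δ > 0, ∀ (V : Set (En n × ℝ)) (u : En n × ℝ → ℝ) (M : ℝ) (x₀ : En n) (ρ t₀ A : ℝ),
      IsDriftSubsolution ν S u V → (∀ X ∈ V, u X ≤ M) → 0 < ρ → 0 < A →
      closedCyl x₀ (ρ * 5) t₀ (t₀ + ρ ^ 2 * T) ⊆ V →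
      (∀ x ∈ closedBall x₀ ρ, u (x, t₀) ≤ M - A) →
      ∀ x ∈ closedBall x₀ (ρ * 2), u (x, t₀ + ρ ^ 2 * T) ≤ M - δ * A := by
  obtain ⟨T, hT, δ, hδ, hstep⟩ := IsNonnegSupersolution.exists_growth_step (n := n) hν hS
  refine ⟨T, hT, δ, hδ, fun V u M x₀ ρ t₀ A hu hM hρ hA hQ h₀ x hx => ?_⟩
  have hρT : 0 < ρ ^ 2 * T := by positivity
  refine le_of_forall_pos_le_add fun ε hε => ?_
  obtain ⟨m, hv, hm⟩ := hu.exists_isNonnegSupersolution hν hM (div_pos hε hρT) (by positivity)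
    (by linarith) hQ
  have hle := hstep _ m x₀ ρ t₀ A hρ hA hv (fun z hz => by
    simp only [Pi.sub_apply, sub_self, mul_zero, add_zero]
    linarith [h₀ z hz]) hm x hx
  simp only [Pi.sub_apply, add_sub_cancel_left, div_mul_cancel₀ _ hρT.ne'] at hle
  linarith

/-! ### Slanted cylinders -/

/-- The affine shear carrying the upright cylinder `B_r(0) × (0, s)` onto `V_r(y, s)`. -/
def slantMap (Y X : En n × ℝ) : En n × ℝ := (X.1 + (X.2 / Y.2) • Y.1, X.2)

theorem continuous_slantMap (Y : En n × ℝ) : Continuous (slantMap Y) := by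
  unfold slantMap
  fun_prop

theorem slantCyl_eq_image (Y : En n × ℝ) (r : ℝ) :
    slantCyl Y r = slantMap Y '' (ball 0 r ×ˢ Ioo 0 Y.2) := by
  ext X
  constructor
  · rintro ⟨hx, ht⟩
    exact ⟨(X.1 - (X.2 / Y.2) • Y.1, X.2), ⟨mem_ball_zero_iff.2 hx, ht⟩, by simp [slantMap]⟩
  · rintro ⟨Z, ⟨hz, ht⟩, rfl⟩
    exact ⟨by simpa [slantMap] using hz, ht⟩

theorem isOpen_slantCyl (Y : En n × ℝ) (r : ℝ) : IsOpen (slantCyl Y r) := by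
  have hside : Continuous fun X : En n × ℝ => ‖X.1 - (X.2 / Y.2) • Y.1‖ := by fun_prop
  exact (isOpen_lt hside continuous_const).inter
    ((isOpen_lt continuous_const continuous_snd).inter (isOpen_lt continuous_snd continuous_const))

theorem isCompact_closure_slantCyl (Y : En n × ℝ) (r : ℝ) :
    IsCompact (closure (slantCyl Y r)) := by
  refine (((isCompact_closedBall 0 r).prod (isCompact_Icc (a := 0) (b := Y.2))).image
    (continuous_slantMap Y)).closure_of_subset ?_
  rw [slantCyl_eq_image]
  exact image_mono (prod_mono ball_subset_closedBall Ioo_subset_Icc_self)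

theorem mapsTo_slantMap_closure_slantCyl {Y : En n × ℝ} (hs : 0 < Y.2) (r : ℝ) :
    MapsTo (slantMap Y) (ball 0 r ×ˢ Icc 0 Y.2) (closure (slantCyl Y r)) := fun X hX => by
  rw [slantCyl_eq_image]
  refine image_closure_subset_closure_image (continuous_slantMap Y) ⟨X, ?_, rfl⟩
  rw [closure_prod_eq, closure_Ioo hs.ne]
  exact ⟨subset_closure hX.1, hX.2⟩

theorem norm_div_smul_le {y : En n} {s h ρ d : ℝ} (hs : 0 < s) (hh : ‖y‖ * h ≤ s * ρ)
    (hd : d ∈ Icc 0 h) : ‖(d / s) • y‖ ≤ ρ := by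
  rw [norm_smul, Real.norm_of_nonneg (div_nonneg hd.1 hs.le), div_mul_eq_mul_div, div_le_iff₀ hs]
  calc d * ‖y‖ ≤ h * ‖y‖ := by gcongr; exact hd.2
    _ ≤ ρ * s := by linarith

theorem closedCyl_subset_slantCyl {y : En n} {s r R ρ t h : ℝ} (hs : 0 < s)
    (hh : ‖y‖ * h ≤ s * ρ) (hR : R + ρ < r) (ht : 0 < t) (hts : t + h < s) :
    closedCyl ((t / s) • y) R t (t + h) ⊆ slantCyl (y, s) r := by
  rintro ⟨x, t'⟩ ⟨hx, hlo, hhi⟩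
  simp only [mem_closedBall, dist_eq_norm] at hx hlo hhi
  refine ⟨?_, ht.trans_le hlo, hhi.trans_lt hts⟩
  have hshift : ‖((t' - t) / s) • y‖ ≤ ρ := norm_div_smul_le hs hh ⟨by linarith, by linarith⟩
  calc ‖x - (t' / s) • y‖ = ‖x - (t / s) • y - ((t' - t) / s) • y‖ := by
        congr 1
        rw [sub_div]
        module
    _ ≤ ‖x - (t / s) • y‖ + ‖((t' - t) / s) • y‖ := norm_sub_le _ _
    _ < r := by linarith

theorem le_sub_pow_mul_of_growth_step {u : En n × ℝ → ℝ} {δ M s r ρ h τ A : ℝ} {y : En n}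
    (hstep : ∀ (x₀ : En n) (t A : ℝ), 0 < A →
      closedCyl x₀ (ρ * 5) t (t + h) ⊆ slantCyl (y, s) r →
      (∀ x ∈ closedBall x₀ ρ, u (x, t) ≤ M - A) →
      ∀ x ∈ closedBall x₀ (ρ * 2), u (x, t + h) ≤ M - δ * A)
    (hδ : 0 < δ) (hs : 0 < s) (h₀ : 0 ≤ h) (hh : ‖y‖ * h ≤ s * ρ) (hρ : ρ * 6 < r) (hA : 0 < A)
    (hτ : 0 < τ) {P : ℕ} (hP : τ + P * h < s)
    (hinit : ∀ x ∈ closedBall ((τ / s) • y) ρ, u (x, τ) ≤ M - A) :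
    ∀ k ≤ P, ∀ x ∈ closedBall (((τ + k * h) / s) • y) ρ, u (x, τ + k * h) ≤ M - δ ^ k * A := by
  intro k
  induction k with
  | zero => simpa using hinit
  | succ k ih =>
    intro hk x hx
    have htime : τ + (k + 1 : ℕ) * h = τ + k * h + h := by push_cast; ring
    have hlast : τ + (k + 1 : ℕ) * h < s := lt_of_le_of_lt (by gcongr) hP
    rw [htime] at hx hlast ⊢
    have hcyl : closedCyl (((τ + k * h) / s) • y) (ρ * 5) (τ + k * h) (τ + k * h + h) ⊆
        slantCyl (y, s) r :=
      closedCyl_subset_slantCyl hs hh (by linarith) (by positivity) hlast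
    have hx' : x ∈ closedBall (((τ + k * h) / s) • y) (ρ * 2) := by
      have hshift : dist (((τ + k * h + h) / s) • y) (((τ + k * h) / s) • y) ≤ ρ := by
        rw [dist_eq_norm, ← sub_smul, ← sub_div, add_sub_cancel_left]
        exact norm_div_smul_le hs hh ⟨h₀, le_rfl⟩
      rw [mem_closedBall] at hx ⊢
      linarith [dist_triangle x (((τ + k * h + h) / s) • y) (((τ + k * h) / s) • y)]
    rw [pow_succ', mul_assoc]
    exact hstep _ _ _ (by positivity) hcyl (ih (by lia)) x hx'

theorem exists_steps_along_axis {K T : ℝ} (hK : 0 < K) (hT : 0 < T) :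
    ∃ P : ℕ, P ≠ 0 ∧ ∀ r s d ℓ : ℝ, 0 < r → 0 < s → r * d ≤ K * s → 0 < ℓ → ℓ ≤ K * r ^ 2 →
      ∃ ρ > 0, P * (ρ ^ 2 * T) = ℓ ∧ ρ * 7 ≤ r ∧ d * (ρ ^ 2 * T) ≤ s * ρ := by
  set c := max (K * T) 7
  obtain ⟨P, hP⟩ := exists_nat_gt (K * c ^ 2 / T)
  have hP₀ : (0 : ℝ) < P := lt_of_le_of_lt (by positivity) hP
  have hPc : K * c ^ 2 ≤ P * T := ((div_lt_iff₀ hT).1 hP).le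
  refine ⟨P, by exact_mod_cast hP₀.ne', fun r s d ℓ hr hs hd hℓ hℓr => ?_⟩
  set ρ := √(ℓ / (P * T))
  have hρ : 0 < ρ := Real.sqrt_pos.2 (by positivity)
  have hρℓ : ρ ^ 2 * (P * T) = ℓ := by
    rw [Real.sq_sqrt (by positivity), div_mul_cancel₀ _ (by positivity)]
  have hcρ : c * ρ ≤ r := by
    have hsq : (c * ρ) ^ 2 * (P * T) ≤ r ^ 2 * (P * T) :=
      calc (c * ρ) ^ 2 * (P * T) = c ^ 2 * ℓ := by rw [← hρℓ]; ring
        _ ≤ c ^ 2 * (K * r ^ 2) := by gcongr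
        _ = r ^ 2 * (K * c ^ 2) := by ring
        _ ≤ r ^ 2 * (P * T) := by gcongr
    exact (sq_le_sq₀ (by positivity) hr.le).1 (le_of_mul_le_mul_right hsq (by positivity))
  have h7 : ρ * 7 ≤ r := by nlinarith [le_max_right (K * T) 7]
  have hKT : K * T * ρ ≤ r := by nlinarith [le_max_left (K * T) 7]
  refine ⟨ρ, hρ, by linarith, h7, le_of_mul_le_mul_left ?_ hr⟩
  calc r * (d * (ρ ^ 2 * T)) = r * d * (ρ ^ 2 * T) := by ring
    _ ≤ K * s * (ρ ^ 2 * T) := by gcongr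
    _ = K * T * ρ * (s * ρ) := by ring
    _ ≤ r * (s * ρ) := by gcongr

theorem IsDriftSubsolution.exists_decay_along_axis [NeZero n] {ν K : ℝ} (hν : 0 < ν) (hK : 0 < K)
    {S : ℝ≥0∞} (hS : S ≠ ⊤) :
    ∃ θ > 0, θ < 1 ∧ ∀ (y : En n) (s r : ℝ) (u : En n × ℝ → ℝ) (M τ A : ℝ),
      IsDriftSubsolution ν S u (slantCyl (y, s) r) → (∀ X ∈ slantCyl (y, s) r, u X ≤ M) →
      0 < r → r * ‖y‖ ≤ K * s → s ≤ K * r ^ 2 → 0 < τ → 2 * τ < s → 0 < A →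
      (∀ x ∈ closedBall ((τ / s) • y) (r / 7), u (x, τ) ≤ M - A) →
      u (((s - τ) / s) • y, s - τ) ≤ M - θ * A := by
  obtain ⟨T, hT, δ, hδ, hstep⟩ := IsDriftSubsolution.exists_growth_step (n := n) hν hS
  obtain ⟨P, hP, hsteps⟩ := exists_steps_along_axis hK hT
  set δ' := min δ (1 / 2)
  have hδ' : 0 < δ' := by positivity
  refine ⟨δ' ^ P, by positivity,
    pow_lt_one₀ hδ'.le ((min_le_right _ _).trans_lt (by norm_num)) hP, ?_⟩
  intro y s r u M τ A hu hM hr hy hsr hτ hτs hA hinit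
  have hs : 0 < s := by linarith
  obtain ⟨ρ, hρ, hℓ, hρr, hshift⟩ :=
    hsteps r s ‖y‖ (s - 2 * τ) hr hs hy (by linarith) (by linarith)
  have hend : τ + P * (ρ ^ 2 * T) = s - τ := by linarith
  have hdecay := le_sub_pow_mul_of_growth_step (δ := δ') (h := ρ ^ 2 * T)
    (fun x₀ t A hA hQ h₀ x hx => (hstep _ u M x₀ ρ t A hu hM hρ hA hQ h₀ x hx).trans
      (by gcongr; exact min_le_left _ _))
    hδ' hs (by positivity) hshift (by linarith) hA hτ (by linarith)
    (fun x hx => hinit x (closedBall_subset_closedBall (by linarith) hx)) P le_rfl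
    (((τ + P * (ρ ^ 2 * T)) / s) • y) (mem_closedBall_self hρ.le)
  rwa [hend] at hdecay

section Boundary

variable {u : En n × ℝ → ℝ} {y : En n} {s r : ℝ}

theorem continuousOn_comp_slantMap (hu : ContinuousOn u (closure (slantCyl (y, s) r)))
    (hs : 0 < s) : ContinuousOn (u ∘ slantMap (y, s)) (ball 0 r ×ˢ Icc 0 s) :=
  hu.comp (continuous_slantMap _).continuousOn (mapsTo_slantMap_closure_slantCyl (Y := (y, s)) hs r)

theorem eventually_forall_closedBall_lt (hu : ContinuousOn u (closure (slantCyl (y, s) r)))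
    (hs : 0 < s) {R : ℝ} (hR : R < r) {γ : ℝ} (h₀ : ∀ z ∈ ball 0 r, u (z, 0) < γ) :
    ∀ᶠ τ in 𝓝[>] 0, ∀ x ∈ closedBall ((τ / s) • y) R, u (x, τ) < γ := by
  have hlocal : ∀ z ∈ closedBall (0 : En n) R,
      {X | u (slantMap (y, s) (X.2, X.1)) < γ} ∈ 𝓝[>] (0 : ℝ) ×ˢ 𝓝 z := fun z hz => by
    have hz' := closedBall_subset_ball hR hz
    have hlim := (continuousOn_comp_slantMap hu hs (z, 0) ⟨hz', left_mem_Icc.2 hs.le⟩).tendsto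
    rw [nhdsWithin_prod_eq, isOpen_ball.nhdsWithin_eq hz', nhdsWithin_Icc_eq_nhdsGE hs] at hlim
    have hlt := Tendsto.eventually_lt_const (u := γ) (by simpa [slantMap] using h₀ z hz') hlim
    exact eventually_swap_iff.1
      (hlt.filter_mono (prod_mono_right _ (nhdsWithin_mono _ Ioi_subset_Ici_self)))
  have hnear : ∀ᶠ X in 𝓝[>] (0 : ℝ) ×ˢ 𝓝ˢ (closedBall (0 : En n) R),
      u (slantMap (y, s) (X.2, X.1)) < γ :=
    (isCompact_closedBall 0 R).mem_prod_nhdsSet_of_forall hlocal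
  filter_upwards [hnear.curry] with τ hτ x hx
  have hx' : x - (τ / s) • y ∈ closedBall 0 R := by simpa [dist_eq_norm] using hx
  simpa [slantMap] using hτ.self_of_nhdsSet _ hx'

theorem tendsto_axis (hu : ContinuousOn u (closure (slantCyl (y, s) r))) (hs : 0 < s)
    (hr : 0 < r) :
    Tendsto (fun τ => u (((s - τ) / s) • y, s - τ)) (𝓝[>] 0) (𝓝 (u (y, s))) := by
  have haxis : ContinuousOn (fun τ => u (slantMap (y, s) (0, s - τ))) (Icc 0 s) :=
    (continuousOn_comp_slantMap hu hs).comp (by fun_prop) fun τ hτ =>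
      ⟨mem_ball_self hr, sub_nonneg.2 hτ.2, sub_le_self s hτ.1⟩
  have hlim := (haxis 0 (left_mem_Icc.2 hs.le)).tendsto
  rw [nhdsWithin_Icc_eq_nhdsGE hs] at hlim
  simpa [slantMap, hs.ne'] using hlim.mono_left (nhdsWithin_mono _ Ioi_subset_Ici_self)

theorem le_supPos {V : Set (En n × ℝ)} (hV : IsCompact (closure V))
    (hu : ContinuousOn u (closure V)) {X : En n × ℝ} (hX : X ∈ V) : u X ≤ supPos u V :=
  (le_max_left _ _).trans (le_csSup ((hV.bddAbove_image (hu.sup continuousOn_const)).mono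
    (image_mono subset_closure)) ⟨X, hX, rfl⟩)

theorem supPos_nonneg (u : En n × ℝ → ℝ) (V : Set (En n × ℝ)) : 0 ≤ supPos u V :=
  Real.sSup_nonneg (by rintro _ ⟨X, _, rfl⟩; exact le_max_right _ _)

end Boundary

theorem slanted_cylinder_lemma_general [NeZero n] {ν K : ℝ} (hν : 0 < ν) (hK : 0 < K) {S : ℝ≥0∞}
    (hS : S ≠ ⊤) :
    ∃ β₂ : ℝ, 0 < β₂ ∧ β₂ < 1 ∧
      ∀ (y : En n) (s r : ℝ) (u : En n × ℝ → ℝ)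
        (a : En n × ℝ → Matrix (Fin n) (Fin n) ℝ) (b : En n × ℝ → En n),
        0 < s → 0 < r →
        K⁻¹ * r * ‖y‖ ≤ s → s ≤ K * r ^ 2 →
        ContinuousOn u (closure (slantCyl (y, s) r)) →
        IsC21 u (slantCyl (y, s) r) →
        UnifParabolic ν a (slantCyl (y, s) r) →
        LxnLtinfPow b (slantCyl (y, s) r) ≤ S →
        (∀ X ∈ slantCyl (y, s) r, 0 ≤ -Dt u X + Lop a b u X) →
        (∀ x ∈ ball (0 : En n) r, u (x, 0) ≤ 0) →
        u (y, s) ≤ β₂ * supPos u (slantCyl (y, s) r) := by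
  obtain ⟨θ, hθ, hθ₁, hdecay⟩ := IsDriftSubsolution.exists_decay_along_axis (n := n) hν hK hS
  refine ⟨1 - θ, by linarith, by linarith, ?_⟩
  intro y s r u a b hs hr hy hsr hcont hu ha hb hpde h₀
  set M := supPos u (slantCyl (y, s) r)
  have hsub : IsDriftSubsolution ν S u (slantCyl (y, s) r) :=
    ⟨isOpen_slantCyl _ _, hu, a, b, ha, hb, hpde⟩
  have hM₀ : 0 ≤ M := supPos_nonneg _ _
  have hM : ∀ X ∈ slantCyl (y, s) r, u X ≤ M :=
    fun X hX => le_supPos (isCompact_closure_slantCyl _ _) hcont hX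
  have hy' : r * ‖y‖ ≤ K * s := by rwa [mul_assoc, inv_mul_le_iff₀ hK] at hy
  have hlimit : ∀ γ > 0, u (y, s) ≤ M + 2 * γ - θ * (M + γ) := fun γ hγ => by
    refine le_of_tendsto (tendsto_axis hcont hs hr) ?_
    filter_upwards [eventually_forall_closedBall_lt hcont hs (show r / 7 < r by linarith)
      (fun z hz => (h₀ z hz).trans_lt hγ), Ioo_mem_nhdsGT (half_pos hs)] with τ hinit hτ
    exact hdecay y s r u (M + 2 * γ) τ (M + γ) hsub (fun X hX => by linarith [hM X hX]) hr hy' hsr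
      hτ.1 (by linarith [hτ.2]) (by positivity) fun x hx => by linarith [hinit x hx]
  refine le_of_forall_pos_le_add fun ε hε => ?_
  linarith [hlimit (ε / 2) (half_pos hε), mul_pos hθ hε]

/-- **Slanted Cylinder Lemma** (Lemma 3.4). -/
theorem slanted_cylinder_lemma
    (n : ℕ) (hn : 0 < n) (ν K S : ℝ) (hν : 1 ≤ ν) (hK : 1 < K) :
    ∃ β₂ : ℝ, 0 < β₂ ∧ β₂ < 1 ∧
      ∀ (y : En n) (s r : ℝ) (u : En n × ℝ → ℝ)
        (a : En n × ℝ → Matrix (Fin n) (Fin n) ℝ) (b : En n × ℝ → En n),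
        0 < s → 0 < r →
        K⁻¹ * r * ‖y‖ ≤ s → s ≤ K * r ^ 2 →
        IsC21 u (closure (slantCyl (y, s) r)) →
        UnifParabolic ν a (slantCyl (y, s) r) →
        LxnLtinfPow b (slantCyl (y, s) r) ≤ ENNReal.ofReal S →
        (∀ X ∈ slantCyl (y, s) r, 0 ≤ -Dt u X + Lop a b u X) →
        (∀ x ∈ ball (0 : En n) r, u (x, 0) ≤ 0) →
        u (y, s) ≤ β₂ * supPos u (slantCyl (y, s) r) := by
  have : NeZero n := ⟨hn.ne'⟩
  obtain ⟨β₂, hβ₀, hβ₁, hβ⟩ := slanted_cylinder_lemma_general (n := n) (ν := ν) (by linarith)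
    (show 0 < K by linarith) (ofReal_ne_top (r := S))
  exact ⟨β₂, hβ₀, hβ₁, fun y s r u a b hs hr hy hsr hu => hβ y s r u a b hs hr hy hsr hu.cont
    (hu.mono subset_closure)⟩
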